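/- arXiv:2605.23519 — 4 statements merged into one kernel-verified Lean document; each statement's English description precedes it below -/
import Mathlib

section
/- For m = 3 and every n ≥ 13, the counting sequence satisfies the constant-coefficient linear recurrence a_n^{(3)} = 2a_{n−1}^{(3)} + a_{n−2}^{(3)} − a_{n−3}^{(3)} − a_{n−4}^{(3)} − 2a_{n−5}^{(3)} − 2a_{n−6}^{(3)} − 2a_{n−7}^{(3)} + 4a_{n−8}^{(3)} + 2a_{n−9}^{(3)} − a_{n−10}^{(3)} + 2a_{n−11}^{(3)} − a_{n−13}^{(3)}. -/
/-- `π` avoids the pattern 132: there are no indices `i < j < k` with `π i < π k < π j`. -/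
def Avoids132 {n : ℕ} (π : Equiv.Perm (Fin n)) : Prop :=
  ¬ ∃ i j k : Fin n, i < j ∧ j < k ∧ π i < π k ∧ π k < π j

/-- `π` is `m`-bounded: adjacent entries differ by at most `m`. -/
def MBounded (m : ℕ) {n : ℕ} (π : Equiv.Perm (Fin n)) : Prop :=
  ∀ i : ℕ, ∀ h : i + 1 < n,
    |(((π ⟨i + 1, h⟩ : Fin n) : ℕ) : ℤ) - (((π ⟨i, by omega⟩ : Fin n) : ℕ) : ℤ)| ≤ (m : ℤ)

/-- `a_n^{(m)}`: the number of `m`-bounded 132-avoiding permutations of length `n`. -/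
noncomputable def aCount (m n : ℕ) : ℕ :=
  Nat.card {π : Equiv.Perm (Fin n) // Avoids132 π ∧ MBounded m π}

/-!
Cut a 132-avoiding permutation at its maximum. Everything before the maximum exceeds everything
after it, so the permutation is a raised 132-avoiding word `L`, the maximum, and a 132-avoiding word
`R`, and `L`, `R` are otherwise arbitrary. Boundedness couples the pieces only through the two steps
at the maximum: the last entry of `L` must be close to the maximum of `L`, and the first entry of
`R` close to the overall maximum, which is possible for nonempty `R` only if `L` has fewer than `m`
entries. Counting by bounds on the first and last entries therefore gives a closed system of
recurrences. For `m = 3` it is a linear system for ten generating functions with polynomial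
coefficients; eliminating down to the unrestricted count leaves a rational function with numerator
of degree `12`, whose denominator lists the coefficients of the recurrence.
-/

open scoped List

namespace BoundedWord

/-- No three entries of `l`, read from left to right, form the pattern 132. -/
def Avoids (l : List ℕ) : Prop :=
  l.Triplewise fun a b c ↦ ¬ (a < c ∧ c < b)

/-- Adjacent entries of `l` differ by at most `m`. -/
def Bounded (m : ℕ) (l : List ℕ) : Prop :=
  l.IsChain fun x y : ℕ ↦ |(y : ℤ) - x| ≤ m

/-- The entry `o` of a word on `{0, …, n - 1}`, if present, lies at most `g` below `n`. Gaps are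
measured from `n`, not from the maximum `n - 1`: no entry has gap `0`, every entry has gap `⊤`. -/
def GapLE (n : ℕ) (g : ℕ∞) (o : Option ℕ) : Prop :=
  ∀ x ∈ o, (n : ℕ∞) ≤ x + g

/-- `l` is the one-line notation, with entries `0, …, n - 1`, of an `m`-bounded 132-avoiding
permutation whose first and last entries have gaps at most `s` and `e`. -/
structure IsBoundedWord (m n : ℕ) (s e : ℕ∞) (l : List ℕ) : Prop where
  perm : l.Perm (List.range n)
  avoids : Avoids l
  bounded : Bounded m l
  head_gap : GapLE n s l.head?
  last_gap : GapLE n e l.getLast?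

open Classical in
/-- The finite set of words satisfying `IsBoundedWord m n s e`. -/
noncomputable def boundedWords (m n : ℕ) (s e : ℕ∞) : Finset (List ℕ) :=
  {l ∈ (List.range n).permutations.toFinset | IsBoundedWord m n s e l}

/-- The number of `m`-bounded 132-avoiding permutations of length `n` whose first and last entries
have gaps at most `s` and `e`. -/
noncomputable def gapCount (m n : ℕ) (s e : ℕ∞) : ℕ :=
  (boundedWords m n s e).card

variable {m n k r : ℕ} {s e : ℕ∞} {l L R : List ℕ}

theorem mem_boundedWords : l ∈ boundedWords m n s e ↔ IsBoundedWord m n s e l := by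
  simpa [boundedWords] using IsBoundedWord.perm

/-! ### Words and permutations -/

theorem perm_range_ofFn (π : Equiv.Perm (Fin n)) :
    (List.ofFn fun i ↦ (π i : ℕ)).Perm (List.range n) := by
  rw [← List.map_coe_finRange_eq_range, ← List.ofFn_eq_map]
  exact π.ofFn_comp_perm fun i ↦ (i : ℕ)

theorem exists_ofFn_eq_of_perm_range (h : l.Perm (List.range n)) :
    ∃ π : Equiv.Perm (Fin n), (List.ofFn fun i ↦ (π i : ℕ)) = l := by
  obtain rfl : l.length = n := by simpa using h.length_eq
  let f (i : Fin l.length) : Fin l.length := ⟨l[i], by simpa using h.subset (l.getElem_mem i.2)⟩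
  have hf : f.Injective := fun i j hij ↦
    Fin.ext ((h.nodup_iff.2 List.nodup_range).getElem_inj_iff.1 (congrArg Fin.val hij))
  exact ⟨.ofBijective f (Finite.injective_iff_bijective.1 hf), by simp [f]⟩

theorem avoids_ofFn_iff (π : Equiv.Perm (Fin n)) :
    Avoids (List.ofFn fun i ↦ (π i : ℕ)) ↔ Avoids132 π := by
  simp only [Avoids, Avoids132, List.triplewise_iff_getElem, List.getElem_ofFn, List.length_ofFn]
  constructor
  · rintro h ⟨i, j, k, hij, hjk, hπ⟩
    exact h i j k hij hjk k.2 hπ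
  · exact fun h i j k hij hjk hk hπ ↦
      h ⟨⟨i, by omega⟩, ⟨j, by omega⟩, ⟨k, hk⟩, hij, hjk, hπ⟩

theorem bounded_ofFn_iff (π : Equiv.Perm (Fin n)) :
    Bounded m (List.ofFn fun i ↦ (π i : ℕ)) ↔ MBounded m π := by
  simp [Bounded, MBounded, List.isChain_iff_getElem]

theorem isBoundedWord_ofFn_iff (π : Equiv.Perm (Fin n)) :
    IsBoundedWord m n ⊤ ⊤ (List.ofFn fun i ↦ (π i : ℕ)) ↔ Avoids132 π ∧ MBounded m π := by
  rw [← avoids_ofFn_iff, ← bounded_ofFn_iff]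
  exact ⟨fun h ↦ ⟨h.avoids, h.bounded⟩,
    fun h ↦ ⟨perm_range_ofFn π, h.1, h.2, by simp [GapLE], by simp [GapLE]⟩⟩

theorem aCount_eq_gapCount (m n : ℕ) : aCount m n = gapCount m n ⊤ ⊤ := by
  classical
  rw [aCount, Nat.subtype_card {π | Avoids132 π ∧ MBounded m π} (by simp)]
  refine Finset.card_nbij (fun π ↦ List.ofFn fun i ↦ (π i : ℕ)) ?_ ?_ ?_
  · exact fun π hπ ↦ mem_boundedWords.2 ((isBoundedWord_ofFn_iff π).2 (by simpa using hπ))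
  · intro π _ σ _ h
    ext i
    exact congrFun (List.ofFn_injective h) i
  · intro l hl
    obtain ⟨π, rfl⟩ := exists_ofFn_eq_of_perm_range (mem_boundedWords.1 hl).perm
    exact ⟨π, by simpa [mem_boundedWords, isBoundedWord_ofFn_iff] using hl, rfl⟩

/-! ### Splitting at the maximum -/

/-- The word with maximal entry `k + r` preceded by `L`, raised above `R`, and followed by `R`. -/
def joinAtMax (k r : ℕ) (L R : List ℕ) : List ℕ :=
  L.map (· + r) ++ (k + r) :: R

theorem perm_range_joinAtMax (hL : L ~ List.range k) (hR : R ~ List.range r) :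
    joinAtMax k r L R ~ List.range (k + r + 1) := by
  have hblocks : L.map (· + r) ++ R ~ List.range (k + r) := by
    rw [add_comm k, List.range_add]
    simpa only [add_comm] using List.perm_append_comm.trans (hR.append (hL.map (r + ·)))
  rw [List.range_succ]
  exact List.perm_middle.trans ((hblocks.cons _).trans (List.perm_append_singleton _ _).symm)

theorem perm_range_length_of_isLowerSet (hl : l.Nodup) (hlower : IsLowerSet {x | x ∈ l}) :
    l ~ List.range l.length := by
  have hsubset : l.toFinset ⊆ Finset.range l.length := by
    intro x hx
    have hle : Finset.range (x + 1) ⊆ l.toFinset := fun y hy ↦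
      List.mem_toFinset.2 (hlower (Finset.mem_range_succ_iff.1 hy) (List.mem_toFinset.1 hx))
    simpa [List.toFinset_card_of_nodup hl] using Finset.card_le_card hle
  have heq : l.toFinset = Finset.range l.length :=
    Finset.eq_of_subset_of_card_le hsubset (by simp [List.toFinset_card_of_nodup hl])
  refine (List.perm_ext_iff_of_nodup hl List.nodup_range).2 fun x ↦ ?_
  simpa using Finset.ext_iff.1 heq x

theorem exists_map_add_eq_of_append_perm_range (hR : R ~ List.range r)
    (h : L ++ R ~ List.range (k + r)) : ∃ L', L' ~ List.range k ∧ L'.map (· + r) = L := by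
  have hL : L ~ (List.range k).map (r + ·) := by
    rw [add_comm k, List.range_add] at h
    exact (List.perm_append_right_iff R).1 (h.trans ((hR.symm.append_right _).trans
      List.perm_append_comm))
  refine ⟨L.map (· - r), by simpa [Function.comp_def] using hL.map (· - r), ?_⟩
  have hle : ∀ x ∈ L, r ≤ x := fun x hx ↦ by
    obtain ⟨y, -, rfl⟩ := List.mem_map.1 (hL.subset hx)
    exact Nat.le_add_right r y
  rw [List.map_map]
  exact (List.map_congr_left fun x hx ↦ Nat.sub_add_cancel (hle x hx)).trans L.map_id

theorem Avoids.lt_of_append_cons (h : Avoids (L ++ n :: R)) (hnodup : (L ++ n :: R).Nodup)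
    (hR : ∀ y ∈ R, y < n) : ∀ x ∈ L, ∀ y ∈ R, y < x := by
  intro x hx y hy
  have hle : ¬ (x < y ∧ y < n) :=
    List.rel_of_pairwise_cons ((List.triplewise_append.1 h).2.2.1 x hx) hy
  have hne : x ≠ y := (List.nodup_append.1 hnodup).2.2 x hx y (List.mem_cons_of_mem _ hy)
  have := hR y hy
  omega

theorem exists_joinAtMax_eq (hl : l ~ List.range (n + 1)) (havoids : Avoids l) :
    ∃ k r L R, k + r = n ∧ L ~ List.range k ∧ R ~ List.range r ∧ joinAtMax k r L R = l := by
  obtain ⟨L, R, rfl⟩ := List.append_of_mem (hl.symm.subset List.self_mem_range_succ)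
  have hnodup : (n :: (L ++ R)).Nodup :=
    List.perm_middle.nodup_iff.1 (hl.nodup_iff.2 List.nodup_range)
  have hLR : L ++ R ~ List.range n := by
    rw [List.range_succ] at hl
    exact (List.perm_cons n).1
      (List.perm_middle.symm.trans (hl.trans (List.perm_append_singleton _ _)))
  have hR_lt : ∀ y ∈ R, y < n := fun y hy ↦
    List.mem_range.1 (hLR.subset (List.mem_append_right L hy))
  have hlower : IsLowerSet {x | x ∈ R} := by
    intro y x hxy hy
    have hx : x ∈ L ++ R := hLR.symm.subset (List.mem_range.2 (hxy.trans_lt (hR_lt y hy)))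
    refine (List.mem_append.1 hx).resolve_left fun hxL ↦ ?_
    exact (havoids.lt_of_append_cons (hl.nodup_iff.2 List.nodup_range) hR_lt x hxL y hy).not_ge hxy
  have hR := perm_range_length_of_isLowerSet
    (List.nodup_append.1 (List.nodup_cons.1 hnodup).2).2.1 hlower
  have hlength : L.length + R.length = n := by simpa using hLR.length_eq
  obtain ⟨L', hL', rfl⟩ := exists_map_add_eq_of_append_perm_range hR (hlength ▸ hLR)
  exact ⟨_, _, L', R, hlength, hL', hR, by rw [joinAtMax, hlength]⟩

theorem gapLE_add_one_iff {o : Option ℕ} : GapLE (n + 1) (s + 1) o ↔ GapLE n s o := by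
  simp only [GapLE, Nat.cast_add_one, ← add_assoc, ENat.add_le_add_iff_right ENat.one_ne_top]

theorem gapLE_map_add_iff {o : Option ℕ} : GapLE (n + r) s (o.map (· + r)) ↔ GapLE n s o := by
  cases o <;> simp [GapLE, add_right_comm _ (r : ℕ∞)]

theorem gapLE_natCast_iff {o : Option ℕ} : GapLE n m o ↔ ∀ x ∈ o, n ≤ x + m := by
  simp only [GapLE, ← Nat.cast_add, Nat.cast_le]

theorem gapLE_add_iff {o : Option ℕ} (ho : ∀ x ∈ o, x < r) :
    GapLE (k + r) s o ↔ GapLE r (s - k) o := by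
  refine forall₂_congr fun x hx ↦ ?_
  have hlt := ho x hx
  induction s with
  | top => simp
  | coe s => norm_cast; omega

theorem avoids_joinAtMax_iff (hL : ∀ x ∈ L, x < k) (hR : ∀ y ∈ R, y < r) :
    Avoids (joinAtMax k r L R) ↔ Avoids L ∧ Avoids R := by
  have hraise : Avoids (L.map (· + r)) ↔ Avoids L := by
    simp [Avoids, List.triplewise_map]
  have hmax : Avoids ((k + r) :: R) ↔ Avoids R := by
    refine List.triplewise_cons.trans (and_iff_right (List.pairwise_of_forall_mem_list ?_))
    intro x _ y hy
    have := hR y hy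
    omega
  have hR_cons : ∀ z ∈ (k + r) :: R, z = k + r ∨ z < r :=
    List.forall_mem_cons.2 ⟨.inl rfl, fun z hz ↦ .inr (hR z hz)⟩
  rw [← hraise, ← hmax]
  refine List.triplewise_append.trans (and_congr_right' (and_iff_left ⟨?_, ?_⟩))
  · refine List.forall_mem_map.2 fun x _ ↦ List.pairwise_of_forall_mem_list fun y hy z hz ↦ ?_
    have := hR_cons y hy
    have := hR_cons z hz
    omega
  · refine fun z hz ↦ List.pairwise_map.2 (List.pairwise_of_forall_mem_list fun x _ y hy ↦ ?_)
    have := hL y hy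
    have := hR_cons z hz
    omega

theorem bounded_joinAtMax_iff (hL : ∀ x ∈ L, x < k) (hR : ∀ y ∈ R, y < r) :
    Bounded m (joinAtMax k r L R) ↔
      Bounded m L ∧ Bounded m R ∧ GapLE k m L.getLast? ∧ GapLE r (m - k) R.head? := by
  have hraise : Bounded m (L.map (· + r)) ↔ Bounded m L := by
    simp [Bounded, List.isChain_map]
  have hmax : Bounded m ((k + r) :: R) ↔ GapLE r (m - k) R.head? ∧ Bounded m R := by
    rw [← gapLE_add_iff fun y hy ↦ hR y (List.mem_of_mem_head? hy), gapLE_natCast_iff, Bounded,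
      List.isChain_cons]
    refine and_congr_left' (forall₂_congr fun y hy ↦ ?_)
    have := hR y (List.mem_of_mem_head? hy)
    rw [abs_le]
    omega
  have hlast : (∀ x ∈ (L.map (· + r)).getLast?, ∀ y ∈ ((k + r) :: R).head?, |(y : ℤ) - x| ≤ m) ↔
      GapLE k m L.getLast? := by
    simp only [List.getLast?_map, Option.mem_map, List.head?_cons, Option.mem_some_iff, forall_eq',
      forall_exists_index, and_imp, forall_apply_eq_imp_iff₂, gapLE_natCast_iff]
    refine forall₂_congr fun x hx ↦ ?_
    have := hL x (List.mem_of_mem_getLast? hx)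
    rw [abs_le]
    omega
  rw [← hraise, ← hlast]
  refine List.isChain_append.trans ?_
  have := hmax
  simp only [Bounded] at *
  tauto

theorem head_gap_joinAtMax_iff :
    GapLE (k + r + 1) (s + 1) (joinAtMax k r L R).head? ↔ GapLE k s L.head? := by
  rw [gapLE_add_one_iff]
  cases L with
  | nil => simp [joinAtMax, GapLE]
  | cons x L => exact gapLE_map_add_iff (o := some x)

theorem last_gap_joinAtMax_iff (hR : ∀ y ∈ R, y < r) :
    GapLE (k + r + 1) (e + 1) (joinAtMax k r L R).getLast? ↔ GapLE r (e - k) R.getLast? := by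
  rw [gapLE_add_one_iff, ← gapLE_add_iff fun y hy ↦ hR y (List.mem_of_mem_getLast? hy)]
  induction R using List.reverseRecOn with
  | nil => simp [joinAtMax, GapLE]
  | append_singleton R y =>
    rw [joinAtMax, ← List.cons_append, ← List.append_assoc, List.getLast?_concat,
      List.getLast?_concat]

theorem isBoundedWord_joinAtMax_iff (hL : L ~ List.range k) (hR : R ~ List.range r) :
    IsBoundedWord m (k + r + 1) (s + 1) (e + 1) (joinAtMax k r L R) ↔
      IsBoundedWord m k s m L ∧ IsBoundedWord m r (m - k) (e - k) R := by
  have hL_lt : ∀ x ∈ L, x < k := fun x hx ↦ List.mem_range.1 (hL.subset hx)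
  have hR_lt : ∀ y ∈ R, y < r := fun y hy ↦ List.mem_range.1 (hR.subset hy)
  constructor
  · rintro ⟨-, havoids, hbounded, hhead, hlast⟩
    obtain ⟨hLa, hRa⟩ := (avoids_joinAtMax_iff hL_lt hR_lt).1 havoids
    obtain ⟨hLb, hRb, hLlast, hRhead⟩ := (bounded_joinAtMax_iff hL_lt hR_lt).1 hbounded
    exact ⟨⟨hL, hLa, hLb, head_gap_joinAtMax_iff.1 hhead, hLlast⟩,
      ⟨hR, hRa, hRb, hRhead, (last_gap_joinAtMax_iff hR_lt).1 hlast⟩⟩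
  · rintro ⟨⟨-, hLa, hLb, hLhead, hLlast⟩, ⟨-, hRa, hRb, hRhead, hRlast⟩⟩
    exact ⟨perm_range_joinAtMax hL hR, (avoids_joinAtMax_iff hL_lt hR_lt).2 ⟨hLa, hRa⟩,
      (bounded_joinAtMax_iff hL_lt hR_lt).2 ⟨hLb, hRb, hLlast, hRhead⟩,
      head_gap_joinAtMax_iff.2 hLhead, (last_gap_joinAtMax_iff hR_lt).2 hRlast⟩

theorem joinAtMax_inj {k' r' : ℕ} {L' R' : List ℕ} (hL : L ~ List.range k)
    (hR : R ~ List.range r) (hR' : R' ~ List.range r') (hmax : k + r = k' + r')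
    (h : joinAtMax k r L R = joinAtMax k' r' L' R') : k = k' ∧ L = L' ∧ R = R' := by
  have hmax_L : k' + r' ∉ L.map (· + r) := by
    simp [← hmax, hL.mem_iff]
  have hmax_R : k' + r' ∉ R := by
    simp [← hmax, hR.mem_iff]
  obtain ⟨hmap, -, rfl⟩ := (List.append_cons_inj_of_notMem hmax_L hmax_R).1 h
  obtain rfl : r = r' := by simpa using hR.length_eq.symm.trans hR'.length_eq
  exact ⟨Nat.add_right_cancel hmax, List.map_injective_iff.2 (add_left_injective r) hmap, rfl⟩

/-! ### Counting -/

theorem gapCount_length_zero (m : ℕ) (s e : ℕ∞) : gapCount m 0 s e = 1 := by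
  have : boundedWords m 0 s e = {[]} := by
    ext l
    rw [mem_boundedWords, Finset.mem_singleton]
    constructor
    · exact fun h ↦ List.perm_nil.1 h.perm
    · rintro rfl
      constructor <;> simp [Avoids, Bounded, GapLE]
  rw [gapCount, this, Finset.card_singleton]

theorem not_gapLE_zero {x : ℕ} (hx : x < n) : ¬ GapLE n 0 (some x) := by
  simpa [GapLE] using hx

theorem IsBoundedWord.lt_of_mem (h : IsBoundedWord m n s e l) {x : ℕ} (hx : x ∈ l) : x < n :=
  List.mem_range.1 (h.perm.subset hx)

theorem IsBoundedWord.ne_nil (h : IsBoundedWord m n s e l) (hn : n ≠ 0) : l ≠ [] := by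
  rintro rfl
  exact hn (by simpa using h.perm.length_eq.symm)

theorem gapCount_head_zero (hn : n ≠ 0) (m : ℕ) (e : ℕ∞) : gapCount m n 0 e = 0 := by
  refine Finset.card_eq_zero.2 (Finset.eq_empty_of_forall_notMem fun l hl ↦ ?_)
  have h := mem_boundedWords.1 hl
  exact not_gapLE_zero (h.lt_of_mem (List.head_mem (h.ne_nil hn)))
    (List.head?_eq_some_head (h.ne_nil hn) ▸ h.head_gap)

theorem gapCount_last_zero (hn : n ≠ 0) (m : ℕ) (s : ℕ∞) : gapCount m n s 0 = 0 := by
  refine Finset.card_eq_zero.2 (Finset.eq_empty_of_forall_notMem fun l hl ↦ ?_)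
  have h := mem_boundedWords.1 hl
  exact not_gapLE_zero (h.lt_of_mem (List.getLast_mem (h.ne_nil hn)))
    (List.getLast?_eq_some_getLast (h.ne_nil hn) ▸ h.last_gap)

theorem gapCount_succ (m n : ℕ) (s e : ℕ∞) :
    gapCount m (n + 1) (s + 1) (e + 1) =
      ∑ k ∈ Finset.range (n + 1), gapCount m k s m * gapCount m (n - k) (m - k) (e - k) := by
  simp only [gapCount, ← Finset.card_product, ← Finset.card_sigma]
  symm
  refine Finset.card_nbij (fun q ↦ joinAtMax q.1 (n - q.1) q.2.1 q.2.2) ?_ ?_ ?_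
  · rintro ⟨k, L, R⟩ hq
    simp only [Finset.mem_coe, Finset.mem_sigma, Finset.mem_range_succ_iff, Finset.mem_product,
      mem_boundedWords] at hq
    obtain ⟨hk, hL, hR⟩ := hq
    have h := (isBoundedWord_joinAtMax_iff hL.perm hR.perm).2 ⟨hL, hR⟩
    rw [Nat.add_sub_of_le hk] at h
    exact mem_boundedWords.2 h
  · rintro ⟨k, L, R⟩ hq ⟨k', L', R'⟩ hq' h
    simp only [Finset.mem_coe, Finset.mem_sigma, Finset.mem_range_succ_iff, Finset.mem_product,
      mem_boundedWords] at hq hq'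
    have hmax : k + (n - k) = k' + (n - k') := by omega
    obtain ⟨rfl, rfl, rfl⟩ := joinAtMax_inj hq.2.1.perm hq.2.2.perm hq'.2.2.perm hmax h
    rfl
  · intro l hl
    have h := mem_boundedWords.1 hl
    obtain ⟨k, r, L, R, rfl, hL, hR, rfl⟩ := exists_joinAtMax_eq h.perm h.avoids
    refine ⟨⟨k, L, R⟩, ?_, by simp⟩
    simpa [mem_boundedWords] using (isBoundedWord_joinAtMax_iff hL hR).1 h

open PowerSeries

theorem coeff_ofNat_mul {A : Type*} [Semiring A] (a n : ℕ) [a.AtLeastTwo] (f : A⟦X⟧) :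
    coeff n (ofNat(a) * f) = ofNat(a) * coeff n f := by
  rw [← map_ofNat (C (R := A)) a, coeff_C_mul]

/-- The generating function, over the length, of the words counted by `gapCount m · s e`. -/
noncomputable def gapSeries (m : ℕ) (s e : ℕ∞) : ℤ⟦X⟧ :=
  .mk fun n ↦ gapCount m n s e

theorem coeff_gapSeries (m n : ℕ) (s e : ℕ∞) :
    coeff n (gapSeries m s e) = gapCount m n s e :=
  coeff_mk n _

theorem gapSeries_head_zero (m : ℕ) (e : ℕ∞) : gapSeries m 0 e = 1 := by
  ext n
  rcases eq_or_ne n 0 with rfl | hn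
  · simp [coeff_gapSeries, gapCount_length_zero]
  · simp [coeff_gapSeries, gapCount_head_zero hn, coeff_one, hn]

theorem gapSeries_last_zero (m : ℕ) (s : ℕ∞) : gapSeries m s 0 = 1 := by
  ext n
  rcases eq_or_ne n 0 with rfl | hn
  · simp [coeff_gapSeries, gapCount_length_zero]
  · simp [coeff_gapSeries, gapCount_last_zero hn, coeff_one, hn]

theorem gapSeries_succ (m : ℕ) (s e : ℕ∞) :
    gapSeries m (s + 1) (e + 1) = 1 + X * (gapSeries m s m +
      ∑ k ∈ Finset.range m, C (gapCount m k s m : ℤ) *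
        (X ^ k * (gapSeries m (m - k) (e - k) - 1))) := by
  ext n
  cases n with
  | zero => simp [gapSeries, gapCount_length_zero]
  | succ n =>
    rw [coeff_gapSeries, gapCount_succ, Finset.sum_range_succ, Nat.sub_self, gapCount_length_zero,
      mul_one, Nat.cast_add, Nat.cast_sum, map_add, coeff_succ_X_mul, map_add, map_sum,
      coeff_gapSeries, coeff_one, if_neg n.succ_ne_zero, zero_add, add_comm]
    congr 1
    -- If `k ≥ m`, the head gap `m - k` is `0`, so only the empty word can follow the maximum. The
    -- empty word is accounted for by `gapSeries m s m`, hence the `- 1` in the other terms.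
    refine Finset.sum_congr_of_eq_on_inter ?_ ?_ ?_
    · intro k hkn hkm
      rw [Finset.mem_range] at hkn hkm
      rw [tsub_eq_zero_of_le (α := ℕ∞) (by exact_mod_cast not_lt.1 hkm),
        gapCount_head_zero (by omega), mul_zero, Nat.cast_zero]
    · intro k _ hkn
      rw [Finset.mem_range, not_lt] at hkn
      rw [coeff_C_mul, coeff_X_pow_mul']
      split_ifs with hk
      · rw [Nat.sub_eq_zero_of_le (by omega), map_sub, coeff_gapSeries, gapCount_length_zero,
          coeff_zero_one, Nat.cast_one, sub_self, mul_zero]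
      · exact mul_zero _
    · intro k hkn _
      rw [Finset.mem_range] at hkn
      rw [coeff_C_mul, coeff_X_pow_mul', if_pos hkn.le, map_sub, coeff_gapSeries, coeff_one,
        if_neg (by omega), sub_zero, Nat.cast_mul]

theorem gapCount_length_one (m : ℕ) (s e : ℕ∞) : gapCount m 1 (s + 1) (e + 1) = 1 := by
  rw [gapCount_succ]
  simp [gapCount_length_zero]

theorem gapCount_length_two (m : ℕ) (s e : ℕ∞) :
    gapCount m 2 (s + 1) (e + 1) = gapCount m 1 m e + gapCount m 1 s m := by
  rw [gapCount_succ]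
  simp [Finset.sum_range_succ, gapCount_length_zero]

/-! ### The case `m = 3` -/

theorem gapSeries_three_succ (s e : ℕ∞) :
    gapSeries 3 (s + 1) (e + 1) = 1 + X * (gapSeries 3 s 3 + gapSeries 3 3 e - 1
      + (gapCount 3 1 s 3 : ℤ⟦X⟧) * X * (gapSeries 3 2 (e - 1) - 1)
      + (gapCount 3 2 s 3 : ℤ⟦X⟧) * X ^ 2 * (gapSeries 3 1 (e - 2) - 1)) := by
  rw [gapSeries_succ]
  have h₁ : (3 - 1 : ℕ∞) = 2 := rfl
  have h₂ : (3 - 2 : ℕ∞) = 1 := rfl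
  simp only [Finset.sum_range_succ, Finset.sum_range_zero, gapCount_length_zero, map_natCast,
    Nat.cast_zero, Nat.cast_one, Nat.cast_ofNat, tsub_zero, h₁, h₂]
  ring

theorem gapSeries_three_head_top (e : ℕ∞) :
    gapSeries 3 ⊤ (e + 1) = 1 + X * (gapSeries 3 ⊤ 3 + gapSeries 3 3 e - 1
      + X * (gapSeries 3 2 (e - 1) - 1) + 2 * X ^ 2 * (gapSeries 3 1 (e - 2) - 1)) := by
  have h₁ : gapCount 3 1 ⊤ 3 = 1 := gapCount_length_one 3 ⊤ 2
  have h₂ : gapCount 3 2 ⊤ 3 = 2 := (gapCount_length_two 3 ⊤ 2).trans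
    (congrArg₂ (· + ·) (gapCount_length_one 3 2 1) h₁)
  exact (gapSeries_three_succ ⊤ e).trans (by simp [h₁, h₂])

theorem gapSeries_three_head_three (e : ℕ∞) :
    gapSeries 3 3 (e + 1) = 1 + X * (gapSeries 3 2 3 + gapSeries 3 3 e - 1
      + X * (gapSeries 3 2 (e - 1) - 1) + 2 * X ^ 2 * (gapSeries 3 1 (e - 2) - 1)) := by
  have h₁ : gapCount 3 1 2 3 = 1 := gapCount_length_one 3 1 2
  have h₂ : gapCount 3 2 2 3 = 2 := (gapCount_length_two 3 1 2).trans
    (congrArg₂ (· + ·) (gapCount_length_one 3 2 1) (gapCount_length_one 3 0 2))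
  exact (gapSeries_three_succ 2 e).trans (by simp [h₁, h₂])

theorem gapSeries_three_head_two (e : ℕ∞) :
    gapSeries 3 2 (e + 1) = 1 + X * (gapSeries 3 1 3 + gapSeries 3 3 e - 1
      + X * (gapSeries 3 2 (e - 1) - 1) + X ^ 2 * (gapSeries 3 1 (e - 2) - 1)) := by
  have h₁ : gapCount 3 1 1 3 = 1 := gapCount_length_one 3 0 2
  have h₂ : gapCount 3 2 1 3 = 1 := (gapCount_length_two 3 0 2).trans
    (congrArg₂ (· + ·) (gapCount_length_one 3 2 1) (gapCount_head_zero one_ne_zero 3 3))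
  exact (gapSeries_three_succ 1 e).trans (by simp [h₁, h₂])

theorem gapSeries_three_head_one (e : ℕ∞) :
    gapSeries 3 1 (e + 1) = 1 + X * gapSeries 3 3 e := by
  simpa [gapCount_head_zero, gapSeries_head_zero] using gapSeries_three_succ 0 e

theorem gapSeries_three_three_two :
    gapSeries 3 3 2 = 1 + (X + X ^ 2) * gapSeries 3 2 3 := by
  have h₃₂ : gapSeries 3 3 2 = 1 + X * (gapSeries 3 2 3 + gapSeries 3 3 1 - 1) := by
    have h₀ : (1 - 2 : ℕ∞) = 0 := rfl
    exact (gapSeries_three_head_three 1).trans (by simp [gapSeries_last_zero, h₀])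
  have h₃₁ : gapSeries 3 3 1 = 1 + X * gapSeries 3 2 3 :=
    (gapSeries_three_head_three 0).trans (by simp [gapSeries_last_zero])
  linear_combination h₃₂ + X * h₃₁

theorem gapSeries_three_one_three :
    gapSeries 3 1 3 = 1 + X + (X ^ 2 + X ^ 3) * gapSeries 3 2 3 := by
  have h₁₃ : gapSeries 3 1 3 = 1 + X * gapSeries 3 3 2 := gapSeries_three_head_one 2
  linear_combination h₁₃ + X * gapSeries_three_three_two

theorem gapSeries_three_two_three :
    (1 - X ^ 2 - 2 * X ^ 3 - X ^ 4 - X ^ 5 - X ^ 6) * gapSeries 3 2 3 =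
      1 + X + X ^ 2 + X ^ 3 + X ^ 4 := by
  have h₂₃ : gapSeries 3 2 3 =
      1 + X * (gapSeries 3 1 3 + gapSeries 3 3 2 - 1 + X * (gapSeries 3 2 1 - 1)) := by
    have h₁ : (2 - 1 : ℕ∞) = 1 := rfl
    exact (gapSeries_three_head_two 2).trans (by simp [gapSeries_last_zero, h₁])
  have h₂₁ : gapSeries 3 2 1 = 1 + X * gapSeries 3 1 3 :=
    (gapSeries_three_head_two 0).trans (by simp [gapSeries_last_zero])
  linear_combination h₂₃ + X ^ 2 * h₂₁ + (X + X ^ 3) * gapSeries_three_one_three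
    + X * gapSeries_three_three_two

theorem gapSeries_three_three_top :
    (1 - X - X ^ 2 - 2 * X ^ 4 + X ^ 6) * gapSeries 3 3 ⊤ =
      1 - X - X ^ 2 + X ^ 3 + X ^ 4 + (X - X ^ 3 + X ^ 5 + X ^ 6) * gapSeries 3 2 3 := by
  have h₃ := gapSeries_three_head_three ⊤
  have h₂ := gapSeries_three_head_two ⊤
  have h₁ := gapSeries_three_head_one ⊤
  simp only [top_add, ENat.top_sub_one, ENat.top_sub_ofNat] at h₁ h₂ h₃
  linear_combination (1 - X ^ 2) * h₃ + X ^ 2 * h₂ + (2 * X ^ 3 - X ^ 5) * h₁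
    + X ^ 3 * gapSeries_three_one_three

theorem gapSeries_three_top_top_sub :
    (1 - X) * (gapSeries 3 ⊤ ⊤ - gapSeries 3 3 ⊤) =
      X ^ 2 * (gapSeries 3 2 3 - gapSeries 3 1 3) := by
  have htop : gapSeries 3 ⊤ ⊤ - gapSeries 3 3 ⊤ = X * (gapSeries 3 ⊤ 3 - gapSeries 3 2 3) := by
    have h := gapSeries_three_head_top ⊤
    have h₃ := gapSeries_three_head_three ⊤
    rw [top_add] at h h₃
    linear_combination h - h₃
  have hthree : gapSeries 3 ⊤ 3 - gapSeries 3 2 3 = X * (gapSeries 3 ⊤ 3 - gapSeries 3 1 3) := by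
    have h : gapSeries 3 ⊤ 3 = _ := gapSeries_three_head_top 2
    have h₂ : gapSeries 3 2 3 = _ := gapSeries_three_head_two 2
    rw [tsub_self, gapSeries_last_zero] at h h₂
    linear_combination h - h₂
  linear_combination (1 - X) * htop + X * hthree

theorem gapSeries_three_top_top :
    (1 - 2 * X - X ^ 2 + X ^ 3 + X ^ 4 + 2 * X ^ 5 + 2 * X ^ 6 + 2 * X ^ 7 - 4 * X ^ 8 - 2 * X ^ 9
      + X ^ 10 - 2 * X ^ 11 + X ^ 13) * gapSeries 3 ⊤ ⊤ =
    1 - X - X ^ 2 + X ^ 3 + 4 * X ^ 4 - 4 * X ^ 6 - 3 * X ^ 7 - 3 * X ^ 8 - 5 * X ^ 9 - 3 * X ^ 10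
      + 2 * X ^ 11 + 2 * X ^ 12 := by
  -- The denominator is `1 - X` times those of `gapSeries 3 2 3` and `gapSeries 3 3 ⊤`.
  have hthree_top :
      (1 - X) * (1 - X ^ 2 - 2 * X ^ 3 - X ^ 4 - X ^ 5 - X ^ 6)
        * (1 - X - X ^ 2 - 2 * X ^ 4 + X ^ 6) * gapSeries 3 3 ⊤ =
      (1 - X) * ((1 - X ^ 2 - 2 * X ^ 3 - X ^ 4 - X ^ 5 - X ^ 6) * (1 - X - X ^ 2 + X ^ 3 + X ^ 4)
        + (X - X ^ 3 + X ^ 5 + X ^ 6) * (1 + X + X ^ 2 + X ^ 3 + X ^ 4)) := by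
    linear_combination
      (1 - X) * (1 - X ^ 2 - 2 * X ^ 3 - X ^ 4 - X ^ 5 - X ^ 6) * gapSeries_three_three_top
      + (1 - X) * (X - X ^ 3 + X ^ 5 + X ^ 6) * gapSeries_three_two_three
  have hdiff :
      (1 - X) * (1 - X ^ 2 - 2 * X ^ 3 - X ^ 4 - X ^ 5 - X ^ 6)
        * (gapSeries 3 ⊤ ⊤ - gapSeries 3 3 ⊤) =
      X ^ 2 * ((1 - X ^ 2 - X ^ 3) * (1 + X + X ^ 2 + X ^ 3 + X ^ 4)
        - (1 + X) * (1 - X ^ 2 - 2 * X ^ 3 - X ^ 4 - X ^ 5 - X ^ 6)) := by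
    linear_combination
      (1 - X ^ 2 - 2 * X ^ 3 - X ^ 4 - X ^ 5 - X ^ 6)
        * (gapSeries_three_top_top_sub - X ^ 2 * gapSeries_three_one_three)
      + X ^ 2 * (1 - X ^ 2 - X ^ 3) * gapSeries_three_two_three
  linear_combination hthree_top + (1 - X - X ^ 2 - 2 * X ^ 4 + X ^ 6) * hdiff

end BoundedWord

theorem recurrence_m_eq_three (n : ℕ) (hn : 13 ≤ n) :
    (aCount 3 n : ℤ) =
      2 * (aCount 3 (n - 1) : ℤ) + (aCount 3 (n - 2) : ℤ) - (aCount 3 (n - 3) : ℤ)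
      - (aCount 3 (n - 4) : ℤ) - 2 * (aCount 3 (n - 5) : ℤ) - 2 * (aCount 3 (n - 6) : ℤ)
      - 2 * (aCount 3 (n - 7) : ℤ) + 4 * (aCount 3 (n - 8) : ℤ) + 2 * (aCount 3 (n - 9) : ℤ)
      - (aCount 3 (n - 10) : ℤ) + 2 * (aCount 3 (n - 11) : ℤ) - (aCount 3 (n - 13) : ℤ) := by
  obtain ⟨j, rfl⟩ := Nat.exists_eq_add_of_le' hn
  have h := congrArg (PowerSeries.coeff (j + 13)) BoundedWord.gapSeries_three_top_top
  open BoundedWord PowerSeries in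
  simp only [add_mul, sub_mul, one_mul, mul_assoc, map_add, map_sub, coeff_gapSeries,
    ← aCount_eq_gapCount, coeff_ofNat_mul, coeff_succ_X_mul, coeff_X_pow_mul',
    le_add_iff_nonneg_left, zero_le, ↓reduceIte, Nat.reduceSubDiff, add_tsub_cancel_right,
    coeff_one, Nat.add_eq_zero_iff, OfNat.ofNat_ne_zero, and_false, coeff_X, Nat.reduceEqDiff,
    sub_self, coeff_X_pow, add_zero, mul_zero] at h
  simp only [Nat.reduceSubDiff, Nat.add_sub_cancel]
  linear_combination h
end

section
/- For every m ≥ 2, the component U_m is weighted aperiodic: in the weighted directed multigraph on U_m having an edge c → d of weight e whenever the coefficient of x^e in the entry of W_{U_m}(x) in row d, column c is positive, the greatest common divisor of the total weights of all directed closed walks equals 1. For every m ≥ 3, the component V_m is weighted aperiodic in the same sense (with W_{V_m}(x) in place of W_{U_m}(x)). -/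
/-- Threshold subtraction in `WithTop ℤ`: `∞ - k = ∞`. -/
def wsub (q : WithTop ℤ) (k : ℕ) : WithTop ℤ := WithTop.map (fun z => z - (k : ℤ)) q

/-- `B_m = {0, 1, …, m-1, ∞}` inside `WithTop ℤ`. -/
def Bset (m : ℕ) : Set (WithTop ℤ) :=
  {x | x = ⊤ ∨ ∃ j : ℕ, j < m ∧ x = ((j : ℤ) : WithTop ℤ)}

/-- `T_{u,v}^{(m)}(n)`: the number of `m`-bounded 132-avoiding permutations `π` of length `n`
with endpoint deficiencies `n - π₁ ≤ u` and `n - πₙ ≤ v` (entries are the 1-based values). -/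
noncomputable def Tcount (m : ℕ) (u v : WithTop ℤ) (n : ℕ) : ℕ :=
  Nat.card {π : Equiv.Perm (Fin n) // Avoids132 π ∧ MBounded m π ∧
    (∀ h : 0 < n, (((n : ℤ) - ((((π ⟨0, h⟩ : Fin n) : ℕ) : ℤ) + 1) : ℤ) : WithTop ℤ) ≤ u) ∧
    (∀ h : 0 < n, (((n : ℤ) - ((((π ⟨n - 1, by omega⟩ : Fin n) : ℕ) : ℤ) + 1) : ℤ) : WithTop ℤ) ≤ v)}

/-- `c_{k,p}`: the number of standardized left blocks, i.e. `c_{1,p} = 1` and for `k ≥ 2` the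
number of 132-avoiding `σ` of length `k-1` with `k - σ₁ ≤ p`. -/
noncomputable def ckp (k : ℕ) (p : WithTop ℤ) : ℕ :=
  if h : k ≤ 1 then 1
  else Nat.card {σ : Equiv.Perm (Fin (k - 1)) // Avoids132 σ ∧
    (((k : ℤ) - ((((σ ⟨0, by omega⟩ : Fin (k - 1)) : ℕ) : ℤ) + 1) : ℤ) : WithTop ℤ) ≤ p}

/-- The state space `B_m²`, with `none` playing the role of `∞`. -/
abbrev StM (m : ℕ) := Option (Fin m) × Option (Fin m)

/-- Interpretation of a state coordinate as a threshold in `WithTop ℤ`. -/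
def thr {m : ℕ} (o : Option (Fin m)) : WithTop ℤ :=
  Option.elim o ⊤ (fun j => (((j : ℕ) : ℤ) : WithTop ℤ))

/-- The entry of the matrix `W_m(x)` in row `pq`, column `rs`:
`Σ_{k=1}^m c_{k,p} x^k [(r,s) = (m-k, q-k)] + x [(r,s) = (p-1, m-1)]`. -/
noncomputable def Went (m : ℕ) (pq rs : StM m) : Polynomial ℤ :=
  (∑ k ∈ Finset.Icc 1 m,
    if thr rs.1 = ((((m : ℤ) - (k : ℤ)) : ℤ) : WithTop ℤ) ∧ thr rs.2 = wsub (thr pq.2) k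
    then Polynomial.C ((ckp k (thr pq.1) : ℤ)) * Polynomial.X ^ k else 0)
  + (if thr rs.1 = wsub (thr pq.1) 1 ∧ thr rs.2 = ((((m : ℤ) - 1) : ℤ) : WithTop ℤ)
     then Polynomial.X else 0)

/-- The dependency graph `Γ_m`: edge from `src` to `tgt` iff the `(tgt, src)` entry of
`W_m(x)` is a nonzero polynomial. -/
def EdgeG (m : ℕ) (src tgt : StM m) : Prop := Went m tgt src ≠ 0

/-- Reachability in `Γ_m`. -/
def ReachG (m : ℕ) : StM m → StM m → Prop := Relation.ReflTransGen (EdgeG m)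

/-- The strongly connected component of a vertex: all mutually reachable vertices. -/
def SCCof (m : ℕ) (a : StM m) : Set (StM m) := {b | ReachG m a b ∧ ReachG m b a}

/-- A set is a strongly connected component iff it is the component of some vertex. -/
def IsSCC (m : ℕ) (C : Set (StM m)) : Prop := ∃ a, C = SCCof m a

/-- A strongly connected component is cyclic iff it contains a directed cycle. -/
def CyclicSCC (m : ℕ) (C : Set (StM m)) : Prop :=
  IsSCC m C ∧ ∃ a ∈ C, ∃ b, EdgeG m a b ∧ ReachG m b a

/-- `U_m = {(p, ∞) : 0 ≤ p ≤ m-1}`. -/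
def Uset (m : ℕ) : Set (StM m) := {x | ∃ p : Fin m, x = (some p, none)}

/-- `V_m = {(p,q) : 0 ≤ q < p ≤ m-1} ∪ {(p, m-1) : 0 ≤ p ≤ m-2}`. -/
def Vset (m : ℕ) : Set (StM m) :=
  {x | ∃ p q : Fin m, x = (some p, some q) ∧
    ((q : ℕ) < (p : ℕ) ∨ ((p : ℕ) + 2 ≤ m ∧ (q : ℕ) = m - 1))}

/-- The state `(∞, m-1)` of the singleton component `I_m`. -/
def iSt (m : ℕ) : StM m := (none, if h : 0 < m then some ⟨m - 1, by omega⟩ else none)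

/-- Walks in a weighted directed multigraph given by a step relation
`step a b e` ("there is an edge `a → b` of weight `e`"); `WWalk step a b w` means
there is a directed walk from `a` to `b` of total weight `w`. -/
inductive WWalk {V : Type*} (step : V → V → ℕ → Prop) : V → V → ℕ → Prop
  | refl (a : V) : WWalk step a a 0
  | cons {a b c : V} {e w : ℕ} : step a b e → WWalk step b c w → WWalk step a c (e + w)

/-- The weighted multigraph of a polynomial matrix: an edge `c → d` of weight `e`
whenever the coefficient of `x^e` in the entry `W_{d,c}` is positive. -/
def mstep {ι : Type*} (W : Matrix ι ι (Polynomial ℤ)) (c d : ι) (e : ℕ) : Prop :=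
  0 < (W d c).coeff e

/-- Weighted aperiodicity: the gcd of the total weights of all directed closed walks is 1. -/
def WAperiodic {ι : Type*} (W : Matrix ι ι (Polynomial ℤ)) : Prop :=
  ∀ g : ℕ, (∀ a : ι, ∀ w : ℕ, WWalk (mstep W) a a w → g ∣ w) → g = 1

/-- The component matrix `W_{U_m}(x)`: the `m × m` matrix indexed by `p, r ∈ {0, …, m-1}`
with `(p, r)` entry `c_{m-r, p} x^{m-r}`. -/
noncomputable def WU (m : ℕ) : Matrix (Fin m) (Fin m) (Polynomial ℤ) :=
  Matrix.of fun p r =>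
    Polynomial.C ((ckp (m - (r : ℕ)) ((((p : ℕ) : ℤ)) : WithTop ℤ) : ℤ)) *
      Polynomial.X ^ (m - (r : ℕ))

/-- The component matrix `W_{V_m}(x)`: the principal submatrix of `W_m(x)` indexed by `V_m`. -/
noncomputable def WVmat (m : ℕ) : Matrix (Vset m) (Vset m) (Polynomial ℤ) :=
  Matrix.of fun a b => Went m (a : StM m) (b : StM m)

/-! In `U_m` the vertex `m - 1` carries a loop of weight `1`. In `V_m` the edges of weight `1`
already form closed walks of the coprime weights `2` and `3`, namely
`(m-1, m-2) → (m-2, m-1) → (m-1, m-2)` and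
`(m-1, m-2) → (m-2, m-1) → (m-1, m-3) → (m-1, m-2)`. -/

theorem WWalk.single {V : Type*} {step : V → V → ℕ → Prop} {a b : V} {e : ℕ}
    (h : step a b e) : WWalk step a b e :=
  .cons h (.refl b)

theorem WAperiodic.of_coprime_closed_walks {ι : Type*} {W : Matrix ι ι (Polynomial ℤ)}
    {a b : ι} {v w : ℕ} (hv : WWalk (mstep W) a a v) (hw : WWalk (mstep W) b b w)
    (hvw : v.Coprime w) : WAperiodic W :=
  fun _ hg => Nat.eq_one_of_dvd_coprimes hvw (hg a v hv) (hg b w hw)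

theorem WAperiodic.of_loop_one {ι : Type*} {W : Matrix ι ι (Polynomial ℤ)} {a : ι}
    (h : mstep W a a 1) : WAperiodic W :=
  .of_coprime_closed_walks (.single h) (.single h) (Nat.coprime_one_left 1)

theorem ckp_one (p : WithTop ℤ) : ckp 1 p = 1 :=
  dif_pos le_rfl

section EdgeWeights

variable {m e : ℕ} {p q r s : Fin m}

theorem mstep_wu_iff : mstep (WU m) r p e ↔ (r : ℕ) + e = m ∧ 0 < ckp e ((p : ℤ) : WithTop ℤ) := by
  have hweight : e = m - r ↔ (r : ℕ) + e = m := by omega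
  simp only [mstep, WU, Matrix.of_apply, Polynomial.coeff_C_mul_X_pow, hweight]
  split_ifs with he
  · obtain rfl : e = m - r := hweight.2 he
    simp [he]
  · simp [he]

theorem thr_some_eq_coe_iff {j : Fin m} {z : ℤ} :
    thr (some j) = (z : WithTop ℤ) ↔ (j : ℤ) = z :=
  WithTop.coe_inj

theorem thr_some_eq_wsub_thr_some_iff {i j : Fin m} {k : ℕ} :
    thr (some i) = wsub (thr (some j)) k ↔ (i : ℕ) + k = j := by
  have hsub : wsub (thr (some j)) k = (((j : ℤ) - k : ℤ) : WithTop ℤ) := rfl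
  rw [hsub, thr_some_eq_coe_iff]
  omega

theorem coeff_went (a b : StM m) :
    (Went m a b).coeff e =
      (if e ∈ Finset.Icc 1 m ∧ thr b.1 = (((m : ℤ) - e : ℤ) : WithTop ℤ) ∧
          thr b.2 = wsub (thr a.2) e then (ckp e (thr a.1) : ℤ) else 0) +
      (if e = 1 ∧ thr b.1 = wsub (thr a.1) 1 ∧ thr b.2 = (((m : ℤ) - 1 : ℤ) : WithTop ℤ)
        then 1 else 0) := by
  have hblock (k : ℕ) (P : Prop) [Decidable P] (c : ℤ) :
      (if P then Polynomial.C c * Polynomial.X ^ k else 0).coeff e =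
        if e = k then (if P then c else 0) else 0 := by
    split_ifs <;> simp_all
  have hlast (P : Prop) [Decidable P] :
      (if P then Polynomial.X else 0 : Polynomial ℤ).coeff e = if e = 1 ∧ P then 1 else 0 := by
    split_ifs <;> simp_all [Polynomial.coeff_X, eq_comm]
  simp only [Went, Polynomial.coeff_add, Polynomial.finsetSum_coeff, hblock, hlast,
    Finset.sum_ite_eq]
  simp only [ite_and]

theorem coeff_went_pos_iff :
    0 < (Went m (some p, some q) (some r, some s)).coeff e ↔
      ((r : ℕ) + e = m ∧ (s : ℕ) + e = q ∧ 0 < ckp e (thr (some p))) ∨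
        (e = 1 ∧ (r : ℕ) + 1 = p ∧ (s : ℕ) + 1 = m) := by
  have hblock : (e ∈ Finset.Icc 1 m ∧ (r : ℤ) = m - e ∧ (s : ℕ) + e = q) ↔
      (r : ℕ) + e = m ∧ (s : ℕ) + e = q := by
    rw [Finset.mem_Icc]
    omega
  have hlast : (s : ℤ) = m - 1 ↔ (s : ℕ) + 1 = m := by omega
  simp only [coeff_went, thr_some_eq_coe_iff, thr_some_eq_wsub_thr_some_iff, hblock, hlast,
    ← and_assoc (c := 0 < ckp e _)]
  split_ifs <;> simp_all

theorem mem_vset_iff :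
    (some p, some q) ∈ Vset m ↔ (q : ℕ) < p ∨ ((p : ℕ) + 2 ≤ m ∧ (q : ℕ) + 1 = m) := by
  have hlast : (q : ℕ) = m - 1 ↔ (q : ℕ) + 1 = m := by omega
  simp [Vset, hlast]

theorem mstep_wvmat_one_iff (hrs : (some r, some s) ∈ Vset m) (hpq : (some p, some q) ∈ Vset m) :
    mstep (WVmat m) ⟨_, hrs⟩ ⟨_, hpq⟩ 1 ↔
      ((r : ℕ) + 1 = m ∧ (s : ℕ) + 1 = q) ∨ ((r : ℕ) + 1 = p ∧ (s : ℕ) + 1 = m) := by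
  simp [mstep, WVmat, coeff_went_pos_iff, ckp_one]

end EdgeWeights

theorem wAperiodic_wu {m : ℕ} (hm : 0 < m) : WAperiodic (WU m) := by
  have hloop : mstep (WU m) ⟨m - 1, by omega⟩ ⟨m - 1, by omega⟩ 1 :=
    mstep_wu_iff.2 ⟨Nat.sub_add_cancel hm, by simp [ckp_one]⟩
  exact .of_loop_one hloop

theorem wAperiodic_wvmat {m : ℕ} (hm : 3 ≤ m) : WAperiodic (WVmat m) := by
  let i₁ : Fin m := ⟨m - 1, by omega⟩
  let i₂ : Fin m := ⟨m - 2, by omega⟩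
  let i₃ : Fin m := ⟨m - 3, by omega⟩
  let a : Vset m := ⟨(some i₁, some i₂), mem_vset_iff.2 (by grind)⟩
  let b : Vset m := ⟨(some i₂, some i₁), mem_vset_iff.2 (by grind)⟩
  let c : Vset m := ⟨(some i₁, some i₃), mem_vset_iff.2 (by grind)⟩
  have hab : mstep (WVmat m) a b 1 := (mstep_wvmat_one_iff _ _).2 (by grind)
  have hba : mstep (WVmat m) b a 1 := (mstep_wvmat_one_iff _ _).2 (by grind)
  have hbc : mstep (WVmat m) b c 1 := (mstep_wvmat_one_iff _ _).2 (by grind)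
  have hca : mstep (WVmat m) c a 1 := (mstep_wvmat_one_iff _ _).2 (by grind)
  have htwo : WWalk (mstep (WVmat m)) a a 2 := .cons hab (.single hba)
  have hthree : WWalk (mstep (WVmat m)) a a 3 := .cons hab (.cons hbc (.single hca))
  exact .of_coprime_closed_walks htwo hthree (by norm_num)

theorem weighted_aperiodicity :
    (∀ m : ℕ, 2 ≤ m → WAperiodic (WU m)) ∧
    (∀ m : ℕ, 3 ≤ m → WAperiodic (WVmat m)) :=
  ⟨fun _ hm => wAperiodic_wu (by omega), fun _ hm => wAperiodic_wvmat hm⟩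
end

section
/- The polynomial 1 − x − x³ has a unique real zero ρ₂ in the interval (0,1), and ρ₂ > 1/2. Moreover, a_n^{(2)} ∼ κ₂ ρ₂^{−n} as n → ∞, i.e., lim_{n→∞} a_n^{(2)} ρ₂^{n} = κ₂, where κ₂ = (2ρ₂ − 1) / ((1 − ρ₂)²(1 + 3ρ₂²)). -/
/-!
Write `0, …, n - 1` in place of `1, …, n`. In a word avoiding 132, every letter before the maximum
exceeds every letter after it. For a 2-bounded word of length `n + 3` this leaves three positions
for the maximum: first, last, or second with the word starting `n + 1, n + 2, n`. The words that
start with their second largest letter and end with their largest one are unique for each length.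
Hence the numbers `b n` of words `n :: t` of length `n + 1` satisfy
`b (n + 3) = b (n + 2) + b n + 1`, only `n + 2` words of length `n + 3` end with their maximum, and
the words of length `n + 3` number `b (n + 3) + (n + 1)`.

Thus `d = b + 1` satisfies `d (n + 3) = d (n + 2) + d n`. If `1 - ρ - ρ ^ 3 = 0`, then for
`x n = d n * ρ ^ n` the quantity `x (n + 2) + ρ ^ 3 * (x (n + 1) + x n)` is constant in `n`, which
removes the characteristic root `1 / ρ`; the remaining second-order recurrence is contracting since
`ρ > 1 / 2` makes `ρ ^ 3 < 1 / 2`.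
-/

open Filter Topology

/-- A list avoids the pattern 132; this is `Avoids132` for permutations written as words. -/
def WordAvoids132 {α : Type*} [LT α] (l : List α) : Prop :=
  l.Triplewise fun a b c => ¬ (a < c ∧ c < b)

namespace WordAvoids132

section Append

variable {α : Type*} [LT α] {s t : List α}

theorem of_append_left (h : WordAvoids132 (s ++ t)) : WordAvoids132 s :=
  (List.triplewise_append.1 h).1

theorem of_append_right (h : WordAvoids132 (s ++ t)) : WordAvoids132 t :=
  (List.triplewise_append.1 h).2.1

end Append

section Preorder

variable {α : Type*} [Preorder α] {a x z : α} {s t : List α}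

theorem cons_of_forall_le (ht : WordAvoids132 t) (ha : ∀ x ∈ t, x ≤ a) :
    WordAvoids132 (a :: t) :=
  List.triplewise_cons.2 ⟨List.pairwise_of_forall_mem_list fun _ _ _ hz hlt =>
    (ha _ hz).not_gt hlt.1, ht⟩

theorem concat_of_forall_le (hs : WordAvoids132 s) (ha : ∀ x ∈ s, x ≤ a) :
    WordAvoids132 (s ++ [a]) := by
  refine List.triplewise_append.2 ⟨hs, List.triplewise_singleton a _, by simp, ?_⟩
  simp only [List.mem_singleton, forall_eq]
  exact List.pairwise_of_forall_mem_list fun _ _ y hy hlt => (ha y hy).not_gt hlt.2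

theorem not_lt_of_append_cons (h : WordAvoids132 (s ++ a :: t)) (ht : ∀ z ∈ t, z < a)
    (hx : x ∈ s) (hz : z ∈ t) : ¬ x < z := fun hxz =>
  List.rel_of_pairwise_cons ((List.triplewise_append.1 h).2.2.1 x hx) hz ⟨hxz, ht z hz⟩

end Preorder

end WordAvoids132

/-- The words (lists of values, with letters `0, …, n - 1`) of the `m`-bounded 132-avoiding
permutations of length `n`. -/
structure IsBoundedWord (m n : ℕ) (l : List ℕ) : Prop where
  perm_range : l.Perm (List.range n)
  avoids132 : WordAvoids132 l
  isChain : l.IsChain fun a b => a ≤ b + m ∧ b ≤ a + m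

section OneLine

variable {n : ℕ}

/-- The one-line notation of a permutation of `Fin n`. -/
def oneLine (π : Equiv.Perm (Fin n)) : List ℕ :=
  List.ofFn fun i => (π i : ℕ)

theorem oneLine_injective : Function.Injective (oneLine (n := n)) := fun _ _ h =>
  Equiv.ext fun i => Fin.ext (congrFun (List.ofFn_injective h) i)

theorem oneLine_perm_range (π : Equiv.Perm (Fin n)) : (oneLine π).Perm (List.range n) := by
  have hval : List.ofFn (Fin.val : Fin n → ℕ) = List.range n := by
    rw [List.ofFn_eq_map, List.map_coe_finRange_eq_range]
  exact hval ▸ Equiv.Perm.ofFn_comp_perm π (Fin.val : Fin n → ℕ)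

theorem exists_oneLine_eq {l : List ℕ} (hl : l.Perm (List.range n)) :
    ∃ π : Equiv.Perm (Fin n), oneLine π = l := by
  have hlen : l.length = n := by simpa using hl.length_eq
  have hnodup : l.Nodup := hl.nodup_iff.2 List.nodup_range
  let f : Fin n → Fin n := fun i =>
    ⟨l[(i : ℕ)], List.mem_range.1 (hl.subset (List.getElem_mem _))⟩
  have hf : f.Injective := fun i j hij =>
    Fin.ext (hnodup.getElem_inj_iff.1 (congrArg Fin.val hij))
  exact ⟨Equiv.ofBijective f hf.bijective_of_finite,
    List.ext_getElem (by simp [oneLine, hlen]) fun i _ _ => by simp [oneLine, f]⟩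

theorem wordAvoids132_oneLine_iff {π : Equiv.Perm (Fin n)} :
    WordAvoids132 (oneLine π) ↔ Avoids132 π := by
  simp only [WordAvoids132, oneLine, List.triplewise_iff_getElem, List.length_ofFn,
    List.getElem_ofFn, Avoids132, not_exists, Fin.val_fin_lt]
  exact ⟨fun h i j k hlt => h i j k hlt.1 hlt.2.1 k.2 hlt.2.2,
    fun h i j k hij hjk hk hlt =>
      h ⟨i, hij.trans (hjk.trans hk)⟩ ⟨j, hjk.trans hk⟩ ⟨k, hk⟩ ⟨hij, hjk, hlt⟩⟩

theorem isChain_oneLine_iff {m : ℕ} {π : Equiv.Perm (Fin n)} :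
    (oneLine π).IsChain (fun a b => a ≤ b + m ∧ b ≤ a + m) ↔ MBounded m π := by
  simp only [oneLine, List.isChain_ofFn, MBounded, abs_le]
  grind

theorem isBoundedWord_oneLine_iff {m : ℕ} {π : Equiv.Perm (Fin n)} :
    IsBoundedWord m n (oneLine π) ↔ Avoids132 π ∧ MBounded m π := by
  rw [← wordAvoids132_oneLine_iff, ← isChain_oneLine_iff]
  exact ⟨fun h => ⟨h.avoids132, h.isChain⟩, fun h => ⟨oneLine_perm_range π, h.1, h.2⟩⟩

theorem setOf_isBoundedWord_eq_image (m n : ℕ) :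
    {l | IsBoundedWord m n l} =
      oneLine '' {π : Equiv.Perm (Fin n) | Avoids132 π ∧ MBounded m π} := by
  ext l
  constructor
  · intro h
    obtain ⟨π, rfl⟩ := exists_oneLine_eq h.perm_range
    exact ⟨π, isBoundedWord_oneLine_iff.1 h, rfl⟩
  · rintro ⟨π, hπ, rfl⟩
    exact isBoundedWord_oneLine_iff.2 hπ

theorem aCount_eq_ncard (m n : ℕ) : aCount m n = {l | IsBoundedWord m n l}.ncard := by
  rw [setOf_isBoundedWord_eq_image, Set.ncard_image_of_injective _ oneLine_injective]
  rfl

theorem finite_setOf_isBoundedWord (m n : ℕ) : {l | IsBoundedWord m n l}.Finite := by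
  rw [setOf_isBoundedWord_eq_image]
  exact Set.toFinite _

end OneLine

theorem cons_perm_range_succ {n : ℕ} {t : List ℕ} :
    (n :: t).Perm (List.range (n + 1)) ↔ t.Perm (List.range n) := by
  rw [List.range_succ, (List.perm_append_singleton n _).congr_right, List.perm_cons]

namespace IsBoundedWord

section

variable {m n x : ℕ} {l s t : List ℕ}

theorem lt (h : IsBoundedWord m n l) (hx : x ∈ l) : x < n :=
  List.mem_range.1 (h.perm_range.subset hx)

theorem mem (h : IsBoundedWord m n l) (hx : x < n) : x ∈ l :=
  h.perm_range.symm.subset (List.mem_range.2 hx)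

theorem nodup (h : IsBoundedWord m n l) : l.Nodup :=
  h.perm_range.nodup_iff.2 List.nodup_range

theorem length_eq (h : IsBoundedWord m n l) : l.length = n := by
  simpa using h.perm_range.length_eq

theorem exists_eq_cons (h : IsBoundedWord m (n + 1) l) : ∃ x t, l = x :: t ∧ x < n + 1 := by
  obtain ⟨x, t, rfl⟩ := List.exists_cons_of_length_eq_add_one h.length_eq
  exact ⟨x, t, rfl, h.lt List.mem_cons_self⟩

theorem cons_iff :
    IsBoundedWord m (n + 1) (n :: t) ↔ IsBoundedWord m n t ∧ ∀ x ∈ t.head?, n ≤ x + m := by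
  constructor
  · intro h
    have hchain := List.isChain_cons.1 h.isChain
    exact ⟨⟨cons_perm_range_succ.1 h.perm_range, h.avoids132.of_append_right (s := [n]),
      hchain.2⟩, fun x hx => (hchain.1 x hx).1⟩
  · rintro ⟨h, hhead⟩
    refine ⟨cons_perm_range_succ.2 h.perm_range,
      h.avoids132.cons_of_forall_le fun x hx => (h.lt hx).le,
      List.isChain_cons.2 ⟨fun x hx => ⟨hhead x hx, ?_⟩, h.isChain⟩⟩
    have := h.lt (List.mem_of_mem_head? hx)
    omega

theorem concat_iff :
    IsBoundedWord m (n + 1) (s ++ [n]) ↔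
      IsBoundedWord m n s ∧ ∀ x ∈ s.getLast?, n ≤ x + m := by
  have hperm : (s ++ [n]).Perm (List.range (n + 1)) ↔ s.Perm (List.range n) := by
    rw [(List.perm_append_singleton n s).congr_left, cons_perm_range_succ]
  constructor
  · intro h
    have hchain := List.isChain_append.1 h.isChain
    exact ⟨⟨hperm.1 h.perm_range, h.avoids132.of_append_left, hchain.1⟩,
      fun x hx => (hchain.2.2 x hx n rfl).2⟩
  · rintro ⟨h, hlast⟩
    refine ⟨hperm.2 h.perm_range, h.avoids132.concat_of_forall_le fun x hx => (h.lt hx).le,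
      List.isChain_append.2 ⟨h.isChain, List.isChain_singleton n, ?_⟩⟩
    rintro x hx _ ⟨⟩
    have := h.lt (List.mem_of_getLast? hx)
    exact ⟨by omega, hlast x hx⟩

theorem lt_max_of_append_cons (h : IsBoundedWord m (n + 1) (s ++ n :: t)) (hx : x ∈ s ++ t) :
    x < n := by
  have hle := h.lt (x := x) (by grind)
  have hne : x ≠ n := by grind [h.nodup]
  omega

theorem lt_of_append_cons {z : ℕ} (h : IsBoundedWord m (n + 1) (s ++ n :: t)) (hx : x ∈ s)
    (hz : z ∈ t) : z < x := by
  have hle : z ≤ x := not_lt.1 <| h.avoids132.not_lt_of_append_cons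
    (fun y hy => h.lt_max_of_append_cons (List.mem_append_right s hy)) hx hz
  have hne : x ≠ z := by grind [h.nodup]
  omega

end

section

variable {n : ℕ} {l s t : List ℕ}

theorem eq_singleton_of_append_cons_max (h : IsBoundedWord 2 (n + 1) (s ++ n :: t)) (hs : s ≠ [])
    (ht : t ≠ []) : ∃ k u, n = k + 2 ∧ s = [k + 1] ∧ t = k :: u := by
  obtain ⟨x, u, rfl⟩ := List.exists_cons_of_ne_nil ht
  have hx : n ≤ x + 2 :=
    ((List.isChain_cons_cons.1 (List.isChain_append.1 h.isChain).2.1).1).1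
  have hs_eq : ∀ y ∈ s, y = n - 1 ∧ n = x + 2 := fun y hy => by
    have hxy : x < y := h.lt_of_append_cons hy List.mem_cons_self
    have hyn : y < n := h.lt_max_of_append_cons (List.mem_append_left _ hy)
    omega
  obtain ⟨y, s, rfl⟩ := List.exists_cons_of_ne_nil hs
  obtain ⟨hy, rfl⟩ := hs_eq y List.mem_cons_self
  refine ⟨x, u, rfl, ?_, rfl⟩
  have hs_nil : s = [] := List.eq_nil_iff_forall_not_mem.2 fun z hz => by
    have hz' := (hs_eq z (List.mem_cons_of_mem y hz)).1
    grind [h.nodup]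
  simp only [hy, hs_nil, Nat.add_one_sub_one]

theorem eq_cons_or_eq_concat_or_eq_cons_max_cons (h : IsBoundedWord 2 (n + 1) l) :
    (∃ t, l = n :: t) ∨ (∃ x s, l = x :: (s ++ [n])) ∨
      ∃ k u, n = k + 2 ∧ l = (k + 1) :: (k + 2) :: k :: u := by
  obtain ⟨s, t, rfl⟩ := List.append_of_mem (h.mem n.lt_succ_self)
  rcases s with _ | ⟨x, s⟩
  · exact .inl ⟨t, rfl⟩
  rcases t with _ | ⟨y, t⟩
  · exact .inr (.inl ⟨x, s, rfl⟩)
  obtain ⟨k, u, rfl, hs, ht⟩ := h.eq_singleton_of_append_cons_max (by simp) (by simp)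
  exact .inr (.inr ⟨k, u, rfl, by rw [hs, ht]; rfl⟩)

theorem cons_max_cons_iff {u : List ℕ} :
    IsBoundedWord 2 (n + 3) ((n + 1) :: (n + 2) :: n :: u) ↔ IsBoundedWord 2 (n + 1) (n :: u) := by
  have hperm : ((n + 1) :: (n + 2) :: n :: u).Perm (List.range (n + 3)) ↔
      (n :: u).Perm (List.range (n + 1)) := by
    rw [(List.Perm.swap _ _ _).congr_left, cons_perm_range_succ, cons_perm_range_succ]
  constructor
  · intro h
    exact ⟨hperm.1 h.perm_range, h.avoids132.of_append_right (s := [n + 1, n + 2]),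
      h.isChain.tail.tail⟩
  · intro h
    have hlt_succ : ∀ z ∈ n :: u, z ≤ n + 1 := fun z hz => (h.lt hz).le
    have havoids : WordAvoids132 ((n + 2) :: n :: u) :=
      h.avoids132.cons_of_forall_le fun z hz => (hlt_succ z hz).trans (by omega)
    have hpairs : ((n + 2) :: n :: u).Pairwise fun b c => ¬ (n + 1 < c ∧ c < b) :=
      .cons (fun z hz hlt => (hlt.1.trans_le (hlt_succ z hz)).false) <|
        List.pairwise_of_forall_mem_list fun _ _ z hz hlt =>
          (hlt.1.trans_le (hlt_succ z hz)).false
    exact ⟨hperm.2 h.perm_range, List.triplewise_cons.2 ⟨hpairs, havoids⟩,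
      .cons_cons (by omega) (.cons_cons (by omega) h.isChain)⟩

end

end IsBoundedWord

/-- The unique word that extends to a 2-bounded 132-avoiding one when `n` is put in front of it and
`n + 1` behind it; it consists of the letters of one parity in decreasing order followed by those
of the other parity in increasing order. -/
def valley : ℕ → List ℕ
  | 0 => []
  | 1 => [0]
  | n + 2 => n :: (valley n ++ [n + 1])

theorem isBoundedWord_valley_add_two (n : ℕ) :
    IsBoundedWord 2 (n + 2) (valley (n + 2)) := by
  induction n using Nat.twoStepInduction with
  | zero => exact ⟨.refl _, List.triplewise_pair _ _ _, by decide⟩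
  | one => exact ⟨by decide, by simp [valley, WordAvoids132], by simp [valley]⟩
  | more n ih _ =>
    refine (IsBoundedWord.concat_iff (s := (n + 2) :: valley (n + 2))).2
      ⟨IsBoundedWord.cons_iff.2 ⟨ih, ?_⟩, ?_⟩
    · simp [valley]
    · simp [valley, List.getLast?_cons]

theorem isBoundedWord_cons_concat_iff {n : ℕ} {s : List ℕ} :
    IsBoundedWord 2 (n + 2) (n :: (s ++ [n + 1])) ↔ s = valley n := by
  refine ⟨fun h => ?_, ?_⟩
  swap
  · rintro rfl
    exact isBoundedWord_valley_add_two n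
  induction n using Nat.twoStepInduction generalizing s with
  | zero => simpa [valley] using h.length_eq
  | one =>
    have hs : IsBoundedWord 2 1 s :=
      (IsBoundedWord.cons_iff.1 (IsBoundedWord.concat_iff (s := 1 :: s).1 h).1).1
    simpa [valley] using hs.perm_range
  | more n ih _ =>
    obtain ⟨h', hlast⟩ := IsBoundedWord.concat_iff (s := (n + 2) :: s).1 h
    obtain ⟨hs, hhead⟩ := IsBoundedWord.cons_iff.1 h'
    obtain ⟨y, s, rfl, hy⟩ := hs.exists_eq_cons
    rcases List.eq_nil_or_concat' s with rfl | ⟨s, x, rfl⟩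
    · simpa using hs.length_eq
    have hx_lt : x < n + 2 := hs.lt (by simp)
    have hx : n + 3 ≤ x + 2 := hlast x (by simp [List.getLast?_cons])
    have hy_ge : n + 2 ≤ y + 2 := hhead y rfl
    have hne : y ≠ x := by grind [hs.nodup]
    obtain rfl : x = n + 1 := by omega
    obtain rfl : y = n := by omega
    rw [ih hs, valley]

/-- The words that follow the letter `n` in the `m`-bounded 132-avoiding words of length `n + 1`
beginning with their maximum `n`. -/
def afterMax (m n : ℕ) : Set (List ℕ) := {t | IsBoundedWord m (n + 1) (n :: t)}

/-- The words that precede the letter `n` in the `m`-bounded 132-avoiding words of length `n + 1`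
ending with their maximum `n`. -/
def beforeMax (m n : ℕ) : Set (List ℕ) := {s | IsBoundedWord m (n + 1) (s ++ [n])}

instance (m n : ℕ) : Finite (afterMax m n) :=
  ((finite_setOf_isBoundedWord m n).subset fun _ h => (IsBoundedWord.cons_iff.1 h).1).to_subtype

instance (m n : ℕ) : Finite (beforeMax m n) :=
  ((finite_setOf_isBoundedWord m n).subset fun _ h => (IsBoundedWord.concat_iff.1 h).1).to_subtype

theorem afterMax_add_three (n : ℕ) :
    afterMax 2 (n + 3) = insert (valley (n + 3))
      (List.cons (n + 2) '' afterMax 2 (n + 2) ∪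
        (fun u => (n + 1) :: (n + 2) :: n :: u) '' afterMax 2 n) := by
  ext l
  constructor
  · intro hl
    obtain ⟨h, hhead⟩ := IsBoundedWord.cons_iff.1 hl
    rcases h.eq_cons_or_eq_concat_or_eq_cons_max_cons with ⟨t, rfl⟩ | ⟨x, s, rfl⟩ | ⟨k, u, hk, rfl⟩
    · exact .inr (.inl ⟨t, h, rfl⟩)
    · have hx_ge : n + 3 ≤ x + 2 := hhead x rfl
      have hx_lt : x < n + 3 := h.lt List.mem_cons_self
      have hne : x ≠ n + 2 := by grind [h.nodup]
      obtain rfl : x = n + 1 := by omega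
      rw [isBoundedWord_cons_concat_iff.1 h]
      exact .inl rfl
    · obtain rfl : n = k := by omega
      exact .inr (.inr ⟨u, IsBoundedWord.cons_max_cons_iff.1 h, rfl⟩)
  · rintro (rfl | ⟨t, h, rfl⟩ | ⟨u, h, rfl⟩)
    · exact IsBoundedWord.cons_iff.2 ⟨isBoundedWord_valley_add_two (n + 1), by simp [valley]⟩
    · exact IsBoundedWord.cons_iff.2 ⟨h, by simp⟩
    · exact IsBoundedWord.cons_iff.2 ⟨IsBoundedWord.cons_max_cons_iff.2 h, by simp⟩

theorem beforeMax_add_two (n : ℕ) :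
    beforeMax 2 (n + 2) = insert ((n + 1) :: valley (n + 1))
      ((· ++ [n + 1]) '' beforeMax 2 (n + 1)) := by
  ext l
  constructor
  · intro hl
    obtain ⟨h, hlast⟩ := IsBoundedWord.concat_iff.1 hl
    rcases h.eq_cons_or_eq_concat_or_eq_cons_max_cons with ⟨t, rfl⟩ | ⟨x, s, rfl⟩ | ⟨k, u, hk, rfl⟩
    · rw [isBoundedWord_cons_concat_iff.1 hl]
      exact .inl rfl
    · exact .inr ⟨x :: s, h, rfl⟩
    · obtain rfl : n = k + 1 := by omega
      have hlt := (IsBoundedWord.cons_max_cons_iff.1 h).lt (List.getLast_mem (List.cons_ne_nil k u))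
      have hge := hlast _ (by
        rw [List.getLast?_cons_cons, List.getLast?_cons_cons]
        exact List.getLast?_eq_some_getLast (List.cons_ne_nil k u))
      omega
  · rintro (rfl | ⟨s, h, rfl⟩)
    · exact isBoundedWord_valley_add_two (n + 1)
    · exact IsBoundedWord.concat_iff.2 ⟨h, by simp⟩

theorem setOf_isBoundedWord_add_three (n : ℕ) :
    {l | IsBoundedWord 2 (n + 3) l} =
      afterMax 2 (n + 3) ∪ (· ++ [n + 1, n + 2]) '' beforeMax 2 (n + 1) := by
  ext l
  constructor
  · intro h
    rcases h.eq_cons_or_eq_concat_or_eq_cons_max_cons with ⟨t, rfl⟩ | ⟨x, s, rfl⟩ | ⟨k, u, hk, rfl⟩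
    · exact .inl (IsBoundedWord.cons_iff.2 ⟨h, by simp⟩)
    · have hs : x :: s ∈ beforeMax 2 (n + 2) := h
      rw [beforeMax_add_two] at hs
      rcases hs with hs | ⟨s', hs', heq⟩
      · obtain ⟨rfl, rfl⟩ := List.cons.inj hs
        exact .inl (IsBoundedWord.cons_iff.2 ⟨h, by simp⟩)
      · refine .inr ⟨s', hs', ?_⟩
        rw [← List.cons_append, ← heq]
        simp
    · exact .inl (IsBoundedWord.cons_iff.2 ⟨h, by rintro _ ⟨⟩; omega⟩)
  · rintro (h | ⟨s, h, rfl⟩)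
    · exact (IsBoundedWord.cons_iff.1 h).1
    · have hs : IsBoundedWord 2 (n + 2) (s ++ [n + 1]) := h
      simpa using! IsBoundedWord.concat_iff.2 ⟨hs, by simp⟩

theorem ncard_afterMax_add_three (n : ℕ) :
    (afterMax 2 (n + 3)).ncard = (afterMax 2 (n + 2)).ncard + (afterMax 2 n).ncard + 1 := by
  have hvalley : valley (n + 3) ∉ List.cons (n + 2) '' afterMax 2 (n + 2) ∪
      (fun u => (n + 1) :: (n + 2) :: n :: u) '' afterMax 2 n := by
    rintro (⟨t, -, h⟩ | ⟨u, hu, h⟩)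
    · simp [valley] at h
    · have hlast : n + 2 ∈ n :: u := by
        have heq : (n + 2) :: n :: u = valley (n + 1) ++ [n + 2] := (List.cons.inj h).2
        cases hv : valley (n + 1) with
        | nil => simp [hv] at heq
        | cons x v =>
          rw [hv] at heq
          rw [(List.cons.inj heq).2]
          exact List.mem_append_right v List.mem_cons_self
      exact absurd (IsBoundedWord.lt hu hlast) (by omega)
  have hdisj : Disjoint (List.cons (n + 2) '' afterMax 2 (n + 2))
      ((fun u => (n + 1) :: (n + 2) :: n :: u) '' afterMax 2 n) := by
    rw [Set.disjoint_left]
    rintro _ ⟨t, -, rfl⟩ ⟨u, -, h⟩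
    simp at h
  rw [afterMax_add_three, Set.ncard_insert_of_notMem hvalley, Set.ncard_union_eq hdisj,
    Set.ncard_image_of_injective _ List.cons_injective,
    Set.ncard_image_of_injective _ fun u v h => by simpa using h]

theorem ncard_beforeMax_add_one (n : ℕ) : (beforeMax 2 (n + 1)).ncard = n + 1 := by
  induction n with
  | zero =>
    have : beforeMax 2 1 = {[0]} := by
      ext s
      constructor
      · intro h
        simpa using (IsBoundedWord.concat_iff.1 h).1.perm_range
      · rintro rfl
        exact isBoundedWord_valley_add_two 0
    rw [this, Set.ncard_singleton]
  | succ n ih =>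
    have hvalley : (n + 1) :: valley (n + 1) ∉ (· ++ [n + 1]) '' beforeMax 2 (n + 1) := by
      rintro ⟨s, hs, h⟩
      obtain ⟨x, s, rfl, hx⟩ := (IsBoundedWord.concat_iff.1 hs).1.exists_eq_cons
      exact hx.ne (List.cons.inj h).1
    rw [beforeMax_add_two, Set.ncard_insert_of_notMem hvalley,
      Set.ncard_image_of_injective _ (List.append_left_injective _), ih]

theorem aCount_two_add_three (n : ℕ) :
    aCount 2 (n + 3) = (afterMax 2 (n + 3)).ncard + (n + 1) := by
  have hdisj : Disjoint (afterMax 2 (n + 3)) ((· ++ [n + 1, n + 2]) '' beforeMax 2 (n + 1)) := by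
    rw [Set.disjoint_left]
    rintro _ ht ⟨s, hs, rfl⟩
    obtain ⟨x, s, rfl, hx⟩ := (IsBoundedWord.concat_iff.1 hs).1.exists_eq_cons
    have := (IsBoundedWord.cons_iff.1 ht).2 x rfl
    omega
  rw [aCount_eq_ncard, setOf_isBoundedWord_add_three, Set.ncard_union_eq hdisj,
    Set.ncard_image_of_injective _ (List.append_left_injective _), ncard_beforeMax_add_one]

theorem afterMax_zero (m : ℕ) : afterMax m 0 = {[]} := by
  ext t
  constructor
  · intro h
    simpa using (IsBoundedWord.cons_iff.1 h).1.perm_range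
  · rintro rfl
    exact ⟨by decide, by simp [WordAvoids132], by simp⟩

theorem afterMax_one : afterMax 2 1 = {[0]} := by
  ext t
  constructor
  · intro h
    simpa using (IsBoundedWord.cons_iff.1 h).1.perm_range
  · rintro rfl
    exact ⟨by decide, by simp [WordAvoids132], by simp⟩

theorem afterMax_two : afterMax 2 2 = {[0, 1], [1, 0]} := by
  ext t
  constructor
  · intro h
    have ht := (IsBoundedWord.cons_iff.1 h).1
    rcases ht.eq_cons_or_eq_concat_or_eq_cons_max_cons with ⟨u, rfl⟩ | ⟨x, s, rfl⟩ | ⟨k, u, hk, rfl⟩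
    · have hu : u ∈ afterMax 2 1 := ht
      rw [afterMax_one] at hu
      exact .inr (congrArg _ hu)
    · obtain rfl : s = [] := by simpa using ht.length_eq
      have hx : x < 1 := ht.lt_max_of_append_cons (s := [x]) List.mem_cons_self
      obtain rfl : x = 0 := by omega
      exact .inl rfl
    · omega
  · rintro (rfl | rfl)
    all_goals exact ⟨by decide, by simp [WordAvoids132], by simp⟩

theorem tendsto_zero_of_norm_add_two_le {E : Type*} [SeminormedAddCommGroup E] {y : ℕ → E} {c : ℝ}
    (hc : 0 ≤ c) (hc_half : c < 1 / 2)
    (hy : ∀ n, ‖y (n + 2)‖ ≤ c * (‖y (n + 1)‖ + ‖y n‖)) : Tendsto y atTop (𝓝 0) := by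
  set P : ℕ → ℝ := fun n => ‖y (n + 1)‖ + ‖y n‖ / 2 with hP
  have hP_succ : ∀ n, P (n + 1) ≤ (c + 1 / 2) * P n := fun n => by
    simp only [hP]
    nlinarith [hy n, norm_nonneg (y n)]
  have hP_geom : ∀ n, P n ≤ (c + 1 / 2) ^ n * P 0 := fun n =>
    le_geom (by linarith) n fun k _ => hP_succ k
  have hgeom : Tendsto (fun n : ℕ => (c + 1 / 2) ^ n * P 0) atTop (𝓝 0) := by
    simpa using (tendsto_pow_atTop_nhds_zero_of_lt_one
      (by linarith : 0 ≤ c + 1 / 2) (by linarith)).mul_const (P 0)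
  refine (tendsto_add_atTop_iff_nat 1).1 (squeeze_zero_norm (fun n => ?_) hgeom)
  exact (le_add_of_nonneg_right (by positivity)).trans (hP_geom n)

section Root

variable {ρ : ℝ}

theorem tendsto_mul_pow_of_add_three_eq {d : ℕ → ℝ} (hd : ∀ n, d (n + 3) = d (n + 2) + d n)
    (hρ_half : 1 / 2 < ρ) (hρ : 1 - ρ - ρ ^ 3 = 0) :
    Tendsto (fun n => d n * ρ ^ n) atTop
      (𝓝 ((d 2 * ρ ^ 2 + ρ ^ 3 * (d 1 * ρ + d 0)) / (1 + 2 * ρ ^ 3))) := by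
  have hρ_cube : 0 < ρ ^ 3 := by positivity
  set L := d 2 * ρ ^ 2 + ρ ^ 3 * (d 1 * ρ + d 0) with hL
  set x : ℕ → ℝ := fun n => d n * ρ ^ n with hx
  have hinvariant : ∀ n, x (n + 2) + ρ ^ 3 * (x (n + 1) + x n) = L := fun n => by
    induction n with
    | zero => simp only [hx, hL]; ring
    | succ n ih =>
      rw [← ih]
      simp only [hx, hd]
      linear_combination -d (n + 2) * ρ ^ (n + 2) * hρ
  set y : ℕ → ℝ := fun n => x n - L / (1 + 2 * ρ ^ 3) with hy
  have hy_rec : ∀ n, y (n + 2) = -ρ ^ 3 * (y (n + 1) + y n) := fun n => by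
    have hL_eq : L / (1 + 2 * ρ ^ 3) * (1 + 2 * ρ ^ 3) = L := by field_simp
    simp only [hy]
    linear_combination hinvariant n - hL_eq
  have hy_zero : Tendsto y atTop (𝓝 0) := by
    refine tendsto_zero_of_norm_add_two_le hρ_cube.le (by linarith) fun n => ?_
    rw [hy_rec, norm_mul, norm_neg, Real.norm_of_nonneg hρ_cube.le]
    gcongr
    exact norm_add_le _ _
  exact tendsto_sub_nhds_zero_iff.1 hy_zero

theorem div_one_add_two_mul_pow_three_eq (hρ_pos : 0 < ρ) (hρ : 1 - ρ - ρ ^ 3 = 0) :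
    (3 * ρ ^ 2 + ρ ^ 3 * (2 * ρ + 2)) / (1 + 2 * ρ ^ 3) =
      (2 * ρ - 1) / ((1 - ρ) ^ 2 * (1 + 3 * ρ ^ 2)) := by
  have hden : (1 - ρ) ^ 2 * (1 + 3 * ρ ^ 2) ≠ 0 :=
    mul_ne_zero (pow_ne_zero 2 (by linarith [pow_pos hρ_pos 3])) (by positivity)
  rw [div_eq_div_iff (by positivity) hden]
  linear_combination (1 - ρ + 2 * ρ ^ 2 + ρ ^ 3 + 6 * ρ ^ 4 - 6 * ρ ^ 5) * hρ

theorem tendsto_aCount_two_mul_pow (hρ_half : 1 / 2 < ρ) (hρ : 1 - ρ - ρ ^ 3 = 0) :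
    Tendsto (fun n => (aCount 2 n : ℝ) * ρ ^ n) atTop
      (𝓝 ((2 * ρ - 1) / ((1 - ρ) ^ 2 * (1 + 3 * ρ ^ 2)))) := by
  have hρ_pos : 0 < ρ := by linarith
  have hρ_one : ρ < 1 := by linarith [pow_pos hρ_pos 3]
  set d : ℕ → ℝ := fun n => (afterMax 2 n).ncard + 1 with hd
  have hd_rec : ∀ n, d (n + 3) = d (n + 2) + d n := fun n => by
    simp only [hd, ncard_afterMax_add_three]
    push_cast
    ring
  have hd_zero : d 0 = 2 := by norm_num [hd, afterMax_zero]
  have hd_one : d 1 = 2 := by norm_num [hd, afterMax_one]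
  have hd_two : d 2 = 3 := by
    norm_num [hd, afterMax_two, Set.ncard_pair (show ([0, 1] : List ℕ) ≠ [1, 0] by decide)]
  have hd_lim := tendsto_mul_pow_of_add_three_eq hd_rec hρ_half hρ
  rw [hd_zero, hd_one, hd_two, div_one_add_two_mul_pow_three_eq hρ_pos hρ] at hd_lim
  have hlinear : Tendsto (fun n : ℕ => ((n : ℝ) - 3) * ρ ^ n) atTop (𝓝 0) := by
    simpa [sub_mul] using (tendsto_self_mul_const_pow_of_lt_one hρ_pos.le hρ_one).sub
      ((tendsto_pow_atTop_nhds_zero_of_lt_one hρ_pos.le hρ_one).const_mul 3)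
  rw [← add_zero ((2 * ρ - 1) / _)]
  refine (hd_lim.add hlinear).congr' (eventually_atTop.2 ⟨3, fun n hn => ?_⟩)
  obtain ⟨k, rfl⟩ := Nat.exists_eq_add_of_le' hn
  simp only [hd, aCount_two_add_three]
  push_cast
  ring

end Root

theorem exists_root_one_sub_sub_pow_three :
    ∃ ρ ∈ Set.Ioo (1 / 2 : ℝ) 1, 1 - ρ - ρ ^ 3 = 0 := by
  have hcont : ContinuousOn (fun x : ℝ => 1 - x - x ^ 3) (Set.Icc (1 / 2) 1) := by fun_prop
  exact intermediate_value_Ioo' (by norm_num) hcont ⟨by norm_num, by norm_num⟩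

theorem strictAnti_one_sub_sub_pow_three : StrictAnti fun x : ℝ => 1 - x - x ^ 3 :=
  fun x y hxy => by
    have hcube : x ^ 3 < y ^ 3 := Odd.strictMono_pow (by decide) hxy
    dsimp only
    linarith

theorem asymptotics_m_eq_two :
    ∃ ρ : ℝ, ρ ∈ Set.Ioo (0 : ℝ) 1 ∧ 1 - ρ - ρ ^ 3 = 0 ∧
      (∀ t : ℝ, t ∈ Set.Ioo (0 : ℝ) 1 → 1 - t - t ^ 3 = 0 → t = ρ) ∧
      1 / 2 < ρ ∧
      Filter.Tendsto (fun n : ℕ => (aCount 2 n : ℝ) * ρ ^ n) Filter.atTop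
        (nhds ((2 * ρ - 1) / ((1 - ρ) ^ 2 * (1 + 3 * ρ ^ 2)))) := by
  obtain ⟨ρ, ⟨hρ_half, hρ_one⟩, hρ⟩ := exists_root_one_sub_sub_pow_three
  have hρ_unique : ∀ t : ℝ, t ∈ Set.Ioo (0 : ℝ) 1 → 1 - t - t ^ 3 = 0 → t = ρ := fun _ _ ht =>
    strictAnti_one_sub_sub_pow_three.injective (ht.trans hρ.symm)
  exact ⟨ρ, ⟨by linarith, hρ_one⟩, hρ, hρ_unique, hρ_half,
    tendsto_aCount_two_mul_pow hρ_half hρ⟩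
end

section
/- The polynomial H(x) = x⁵ − x⁴ − x³ + x² − 2x + 1 is strictly decreasing on [0,1] and has a unique real zero ρ₃ in the interval (0,1). Moreover, a_n^{(3)} ∼ κ₃ ρ₃^{−n} as n → ∞, i.e., lim_{n→∞} a_n^{(3)} ρ₃^{n} = κ₃, where κ₃ = −N₃(ρ₃) / (ρ₃ · D₃′(ρ₃)), with N₃(x) = 1 − x − x² + x³ + 4x⁴ − 4x⁶ − 3x⁷ − 3x⁸ − 5x⁹ − 3x¹⁰ + 2x¹¹ + 2x¹² and D₃(x) = 1 − 2x − x² + x³ + x⁴ + 2x⁵ + 2x⁶ + 2x⁷ − 4x⁸ − 2x⁹ + x¹⁰ − 2x¹¹ + x¹³. -/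
/-- The numerator `N₃(x)` of `A^{(3)}(x)`. -/
noncomputable def N3poly : Polynomial ℝ :=
  1 - Polynomial.X - Polynomial.X ^ 2 + Polynomial.X ^ 3 + 4 * Polynomial.X ^ 4
    - 4 * Polynomial.X ^ 6 - 3 * Polynomial.X ^ 7 - 3 * Polynomial.X ^ 8
    - 5 * Polynomial.X ^ 9 - 3 * Polynomial.X ^ 10 + 2 * Polynomial.X ^ 11
    + 2 * Polynomial.X ^ 12

/-- The denominator `D₃(x)` of `A^{(3)}(x)`. -/
noncomputable def D3poly : Polynomial ℝ :=
  1 - 2 * Polynomial.X - Polynomial.X ^ 2 + Polynomial.X ^ 3 + Polynomial.X ^ 4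
    + 2 * Polynomial.X ^ 5 + 2 * Polynomial.X ^ 6 + 2 * Polynomial.X ^ 7
    - 4 * Polynomial.X ^ 8 - 2 * Polynomial.X ^ 9 + Polynomial.X ^ 10
    - 2 * Polynomial.X ^ 11 + Polynomial.X ^ 13

/-!
Cutting a 132-avoiding word at its maximum leaves two 132-avoiding words, the left one lying above
the right one. Boundedness only constrains how far the last letter of the left word and the first
letter of the right word lie below their words' lengths. In value, the left word
separates the maximum from the right word, so it has fewer than `m` letters unless the right word is
empty. For fixed `m` the generating functions with truncated gaps thus satisfy a linear system; for
`m = 3` solving it gives `N₃ / D₃`. The denominator factors as `D₃ = (1 - X²) * H * K`, and `ρ₃` is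
its only complex zero of modulus at most `ρ₃`. Multiplying by `X - ρ₃` therefore leaves a power
series that converges absolutely at `ρ₃`; its partial sums there are `-ρ₃ a_n ρ₃ⁿ`.
-/

namespace Bounded132

open Filter Topology

section Words

/-- How far the first letter of `l` lies below `l.length`; it is `0` exactly for the empty word when
the letters of `l` are `0, …, l.length - 1`. -/
def headGap (l : List ℕ) : ℕ := l.length - l.headD 0

/-- The analogue of `headGap` for the last letter. -/
def lastGap (l : List ℕ) : ℕ := l.length - l.getLastD 0

/-- The word of an `m`-bounded 132-avoiding permutation of `0, …, l.length - 1`. -/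
structure IsBoundedWord (m : ℕ) (l : List ℕ) : Prop where
  perm : l.Perm (List.range l.length)
  avoids : l.Triplewise fun x y z ↦ ¬(x < z ∧ z < y)
  bounded : l.IsChain fun x y ↦ x ≤ y + m ∧ y ≤ x + m

/-- Puts a maximal letter between `L` and `R`, with `L` raised above `R`: the decomposition of a
132-avoiding permutation at its maximum. -/
def glue (L R : List ℕ) : List ℕ := L.map (· + R.length) ++ (L.length + R.length) :: R

variable {m : ℕ} {l L R L' R' : List ℕ}

@[simp]
lemma length_glue (L R : List ℕ) : (glue L R).length = L.length + R.length + 1 := by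
  simp [glue, add_assoc]

lemma lt_length_of_perm_range (h : l.Perm (List.range l.length)) {x : ℕ} (hx : x ∈ l) :
    x < l.length :=
  List.mem_range.1 (h.mem_iff.1 hx)

lemma perm_range_length_of_nodup (hl : l.Nodup) (hlt : ∀ x ∈ l, x < l.length) :
    l.Perm (List.range l.length) :=
  (hl.subperm fun x hx ↦ List.mem_range.2 (hlt x hx)).perm_of_length_le (by simp)

lemma headGap_cons (x : ℕ) (l : List ℕ) : headGap (x :: l) = l.length + 1 - x := rfl

lemma lastGap_concat (l : List ℕ) (x : ℕ) : lastGap (l ++ [x]) = l.length + 1 - x := by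
  simp [lastGap]

lemma headGap_pos (hl : ∀ x ∈ l, x < l.length) (hne : l ≠ []) : 0 < headGap l := by
  cases l with
  | nil => contradiction
  | cons x l => simpa [headGap_cons] using hl x

lemma lastGap_pos (hl : ∀ x ∈ l, x < l.length) (hne : l ≠ []) : 0 < lastGap l := by
  obtain rfl | ⟨l, x, rfl⟩ := l.eq_nil_or_concat'
  · contradiction
  · simpa [lastGap_concat] using hl x (by simp)

lemma headGap_glue (hL : ∀ x ∈ L, x < L.length) (R : List ℕ) :
    headGap (glue L R) = headGap L + 1 := by
  cases L with
  | nil => simp [headGap, glue]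
  | cons x L =>
    have hx : x < L.length + 1 := by simpa using hL x
    simp only [glue, List.map_cons, List.cons_append, headGap_cons, List.length_append,
      List.length_map, List.length_cons]
    omega

lemma lastGap_glue_le_iff (hR : ∀ x ∈ R, x < R.length) (L : List ℕ) (b : ℕ∞) :
    (lastGap (glue L R) : ℕ∞) ≤ b + 1 ↔ (lastGap R : ℕ∞) ≤ b - L.length := by
  obtain rfl | ⟨R, x, rfl⟩ := R.eq_nil_or_concat'
  · simp [lastGap, glue]
  · have hx : x < R.length + 1 := by simpa using hR x
    induction b using ENat.recTopCoe with
    | top => simp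
    | coe b =>
      norm_cast
      simp only [glue, ← List.cons_append, ← List.append_assoc, lastGap_concat,
        List.length_append, List.length_map, List.length_cons, List.length_nil]
      omega

lemma glue_perm_range (hL : L.Perm (List.range L.length)) (hR : R.Perm (List.range R.length)) :
    (glue L R).Perm (List.range (glue L R).length) := by
  have hlow : ∀ x ∈ R, x < R.length := fun _ ↦ lt_length_of_perm_range hR
  have hhigh : ∀ x ∈ L, x < L.length := fun _ ↦ lt_length_of_perm_range hL
  refine perm_range_length_of_nodup ?_ ?_
  · have hLnodup := hL.nodup_iff.2 List.nodup_range
    have hRnodup := hR.nodup_iff.2 List.nodup_range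
    rw [glue, List.nodup_append, List.nodup_cons]
    refine ⟨hLnodup.map (add_left_injective _), ⟨fun h ↦ absurd (hlow _ h) (by omega), hRnodup⟩, ?_⟩
    grind
  · grind [glue]

lemma triplewise_glue_iff (hL : ∀ x ∈ L, x < L.length) (hR : ∀ x ∈ R, x < R.length) :
    ((glue L R).Triplewise fun x y z ↦ ¬(x < z ∧ z < y)) ↔
      (L.Triplewise fun x y z ↦ ¬(x < z ∧ z < y)) ∧
        R.Triplewise fun x y z ↦ ¬(x < z ∧ z < y) := by
  have hcross : ∀ x ∈ L.map (· + R.length), ∀ z ∈ R, ¬x < z := by grind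
  have hmax : ∀ z ∈ R, ¬L.length + R.length < z := by grind
  simp only [glue, List.triplewise_append, List.triplewise_cons, List.triplewise_map,
    add_lt_add_iff_right]
  refine ⟨fun h ↦ ⟨h.1, h.2.1.2⟩, fun h ↦ ⟨h.1, ⟨?_, h.2⟩, ?_, ?_⟩⟩
  · exact List.pairwise_of_forall_mem_list fun y _ z hz hlt ↦ hmax z hz hlt.1
  · intro x hx
    refine List.Pairwise.cons (fun z hz hlt ↦ hcross x hx z hz hlt.1) ?_
    exact List.pairwise_of_forall_mem_list fun y _ z hz hlt ↦ hcross x hx z hz hlt.1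
  · intro z hz
    refine List.pairwise_of_forall_mem_list fun x hx y hy hlt ↦ ?_
    rcases List.mem_cons.1 hz with rfl | hzR
    · grind
    · exact hcross x hx z hzR hlt.1

lemma isChain_glue_iff (hL : ∀ x ∈ L, x < L.length) (hR : ∀ x ∈ R, x < R.length) :
    ((glue L R).IsChain fun x y ↦ x ≤ y + m ∧ y ≤ x + m) ↔
      (L.IsChain fun x y ↦ x ≤ y + m ∧ y ≤ x + m) ∧
        (R.IsChain fun x y ↦ x ≤ y + m ∧ y ≤ x + m) ∧
          lastGap L ≤ m ∧ headGap R ≤ m - L.length := by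
  have hjoinL : (∀ x ∈ (L.map (· + R.length)).getLast?,
      x ≤ L.length + R.length + m ∧ L.length + R.length ≤ x + m) ↔ lastGap L ≤ m := by
    obtain rfl | ⟨L, x, rfl⟩ := L.eq_nil_or_concat'
    · simp [lastGap]
    · have hx : x < L.length + 1 := by simpa using hL x
      simp only [List.map_append, List.map_cons, List.map_nil, List.getLast?_concat,
        Option.mem_some_iff, forall_eq', lastGap_concat, List.length_append, List.length_cons,
        List.length_nil]
      omega
  have hjoinR : (∀ y ∈ R.head?,
      L.length + R.length ≤ y + m ∧ y ≤ L.length + R.length + m) ↔ headGap R ≤ m - L.length := by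
    cases R with
    | nil => simp [headGap]
    | cons y R =>
      have hy : y < R.length + 1 := by simpa using hR y
      simp only [List.head?_cons, Option.mem_some_iff, forall_eq', headGap_cons, List.length_cons]
      omega
  have hshift : ((L.map (· + R.length)).IsChain fun x y ↦ x ≤ y + m ∧ y ≤ x + m) ↔
      L.IsChain fun x y ↦ x ≤ y + m ∧ y ≤ x + m := by
    simp only [List.isChain_map, add_right_comm _ R.length m, add_le_add_iff_right]
  simp only [glue, List.isChain_append, List.isChain_cons, hshift, hjoinR, List.head?_cons,
    Option.mem_some_iff, forall_eq', hjoinL]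
  tauto

lemma isBoundedWord_glue_iff (hL : L.Perm (List.range L.length))
    (hR : R.Perm (List.range R.length)) :
    IsBoundedWord m (glue L R) ↔
      IsBoundedWord m L ∧ IsBoundedWord m R ∧ lastGap L ≤ m ∧ headGap R ≤ m - L.length := by
  have hhigh : ∀ x ∈ L, x < L.length := fun _ ↦ lt_length_of_perm_range hL
  have hlow : ∀ x ∈ R, x < R.length := fun _ ↦ lt_length_of_perm_range hR
  constructor
  · rintro ⟨-, havoids, hbounded⟩
    rw [triplewise_glue_iff hhigh hlow] at havoids
    rw [isChain_glue_iff hhigh hlow] at hbounded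
    exact ⟨⟨hL, havoids.1, hbounded.1⟩, ⟨hR, havoids.2, hbounded.2.1⟩, hbounded.2.2⟩
  · rintro ⟨hL', hR', hgaps⟩
    exact ⟨glue_perm_range hL hR, (triplewise_glue_iff hhigh hlow).2 ⟨hL'.avoids, hR'.avoids⟩,
      (isChain_glue_iff hhigh hlow).2 ⟨hL'.bounded, hR'.bounded, hgaps⟩⟩

lemma glue_injective (hL : ∀ x ∈ L, x < L.length) (hL' : ∀ x ∈ L', x < L'.length)
    (h : glue L R = glue L' R') : L = L' ∧ R = R' := by
  have hlen : L.length + R.length = L'.length + R'.length := by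
    simpa using congrArg List.length h
  have hprefix {A B : List ℕ} (hA : ∀ x ∈ A, x < A.length) :
      (glue A B).takeWhile (· ≠ A.length + B.length) = A.map (· + B.length) := by
    rw [glue, List.takeWhile_append_of_pos (by grind)]
    simp
  have hmap : L.map (· + R.length) = L'.map (· + R'.length) := by
    rw [← hprefix hL, ← hprefix hL', h, hlen]
  rw [glue, glue, hmap, List.append_cancel_left_eq, List.cons.injEq] at h
  obtain ⟨-, rfl⟩ := h
  exact ⟨List.map_injective_iff.2 (add_left_injective _) hmap, rfl⟩

lemma exists_eq_glue (hl : l.Perm (List.range l.length)) (hne : l ≠ [])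
    (havoids : l.Triplewise fun x y z ↦ ¬(x < z ∧ z < y)) :
    ∃ L R : List ℕ, L.Perm (List.range L.length) ∧ R.Perm (List.range R.length) ∧
      l = glue L R := by
  have hpos : 0 < l.length := List.length_pos_iff.2 hne
  obtain ⟨A, B, hAB⟩ := List.append_of_mem
    (hl.mem_iff.2 (List.mem_range.2 (Nat.sub_one_lt_of_lt hpos)))
  generalize hn : l.length - 1 = n at hAB
  subst hAB
  have hlen : n = A.length + B.length := by simpa [add_assoc] using hn.symm
  have hmem (x : ℕ) : x ∈ A ∨ x = n ∨ x ∈ B ↔ x < n + 1 := by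
    simpa [hlen, add_assoc] using hl.mem_iff (a := x)
  have hnodup := hl.nodup_iff.2 List.nodup_range
  simp only [List.nodup_append, List.nodup_cons] at hnodup
  obtain ⟨hA, ⟨hnB, hB⟩, hdisj⟩ := hnodup
  have habove : ∀ x ∈ A, ∀ y ∈ B, y < x := by
    intro x hx y hy
    have h132 := (List.pairwise_cons.1 ((List.triplewise_append.1 havoids).2.2.1 x hx)).1 y hy
    grind
  have hBlt : ∀ x ∈ B, x < B.length := by
    intro x hx
    have hsub : List.range (x + 1) ⊆ B := by grind
    simpa using (List.nodup_range.subperm hsub).length_le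
  have hAge : ∀ x ∈ A, B.length ≤ x := by
    intro x hx
    have hsub : B ⊆ List.range x := fun y hy ↦ List.mem_range.2 (habove x hx y hy)
    simpa using (hB.subperm hsub).length_le
  have hAlt : ∀ x ∈ A, x < A.length + B.length := by grind
  refine ⟨A.map (· - B.length), B, perm_range_length_of_nodup ?_ ?_,
    perm_range_length_of_nodup hB hBlt, ?_⟩
  · exact hA.map_on fun x hx y hy hxy ↦ by grind
  · simp only [List.forall_mem_map, List.length_map]
    exact fun x hx ↦ Nat.sub_lt_right_of_lt_add (hAge x hx) (hAlt x hx)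
  · have hshift : (A.map (· - B.length)).map (· + B.length) = A := by
      rw [List.map_map]
      exact (List.map_congr_left fun x hx ↦ Nat.sub_add_cancel (hAge x hx)).trans (List.map_id' A)
    rw [glue, hshift, List.length_map, hlen]

end Words

section Counting

open Finset.HasAntidiagonal

variable {m n : ℕ} {a b : ℕ∞} {l : List ℕ}

open Classical in
/-- The words of the `m`-bounded 132-avoiding permutations of `n` letters whose first and last
letters lie at most `a` and `b` below `n`; `⊤` imposes no condition. -/
noncomputable def boundedWords (m n : ℕ) (a b : ℕ∞) : Finset (List ℕ) :=
  {l ∈ (List.range n).permutations.toFinset |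
    IsBoundedWord m l ∧ (headGap l : ℕ∞) ≤ a ∧ (lastGap l : ℕ∞) ≤ b}

/-- The number of `m`-bounded 132-avoiding permutations of `n` letters whose first and last letters
lie at most `a` and `b` below `n`. -/
noncomputable def wordCount (m n : ℕ) (a b : ℕ∞) : ℕ := (boundedWords m n a b).card

lemma mem_boundedWords : l ∈ boundedWords m n a b ↔
    l.length = n ∧ IsBoundedWord m l ∧ (headGap l : ℕ∞) ≤ a ∧ (lastGap l : ℕ∞) ≤ b := by
  simp only [boundedWords, Finset.mem_filter, List.mem_toFinset, List.mem_permutations]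
  refine and_congr_left fun hl ↦ ⟨fun h ↦ by simpa using h.length_eq, ?_⟩
  rintro rfl
  exact hl.1.perm

lemma wordCount_zero (m : ℕ) (a b : ℕ∞) : wordCount m 0 a b = 1 := by
  have hnil : boundedWords m 0 a b = {[]} := by
    ext l
    rw [mem_boundedWords, List.length_eq_zero_iff, Finset.mem_singleton, and_iff_left_of_imp]
    rintro rfl
    exact ⟨⟨by simp, .nil, .nil⟩, by simp [headGap], by simp [lastGap]⟩
  rw [wordCount, hnil, Finset.card_singleton]

lemma wordCount_succ_zero_left (m n : ℕ) (b : ℕ∞) : wordCount m (n + 1) 0 b = 0 := by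
  refine Finset.card_eq_zero.2 (Finset.eq_empty_of_forall_notMem fun l hl ↦ ?_)
  obtain ⟨hlen, hword, hhead, -⟩ := mem_boundedWords.1 hl
  have hpos := headGap_pos (fun _ ↦ lt_length_of_perm_range hword.perm)
    (List.ne_nil_of_length_eq_add_one hlen)
  simp_all

lemma wordCount_succ_zero_right (m n : ℕ) (a : ℕ∞) : wordCount m (n + 1) a 0 = 0 := by
  refine Finset.card_eq_zero.2 (Finset.eq_empty_of_forall_notMem fun l hl ↦ ?_)
  obtain ⟨hlen, hword, -, hlast⟩ := mem_boundedWords.1 hl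
  have hpos := lastGap_pos (fun _ ↦ lt_length_of_perm_range hword.perm)
    (List.ne_nil_of_length_eq_add_one hlen)
  simp_all

lemma glue_mem_boundedWords_iff {L R : List ℕ} (hL : L.Perm (List.range L.length))
    (hR : R.Perm (List.range R.length)) :
    glue L R ∈ boundedWords m (n + 1) (a + 1) (b + 1) ↔
      L.length + R.length = n ∧ L ∈ boundedWords m L.length a m ∧
        R ∈ boundedWords m R.length (m - L.length) (b - L.length) := by
  have hhigh : ∀ x ∈ L, x < L.length := fun _ ↦ lt_length_of_perm_range hL
  have hlow : ∀ x ∈ R, x < R.length := fun _ ↦ lt_length_of_perm_range hR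
  simp only [mem_boundedWords, length_glue, add_left_inj, isBoundedWord_glue_iff hL hR,
    headGap_glue hhigh, lastGap_glue_le_iff hlow, ← ENat.natCast_sub,
    Nat.cast_add, Nat.cast_one, Nat.cast_le, ENat.add_le_add_iff_right ENat.one_ne_top]
  tauto

theorem wordCount_succ (m n : ℕ) (a b : ℕ∞) :
    wordCount m (n + 1) (a + 1) (b + 1) = ∑ p ∈ antidiagonal n,
      wordCount m p.1 a m * wordCount m p.2 (m - p.1) (b - p.1) := by
  simp only [wordCount, ← Finset.card_product]
  rw [← Finset.card_sigma]
  symm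
  refine Finset.card_nbij (fun x ↦ glue x.2.1 x.2.2) ?_ ?_ ?_
  · rintro ⟨⟨s, r⟩, L, R⟩ hx
    simp only [Finset.coe_sigma, Set.mem_sigma_iff, Finset.mem_coe, Finset.mem_product,
      mem_antidiagonal] at hx
    obtain ⟨hsr, hL, hR⟩ := hx
    obtain ⟨rfl, hL', -⟩ := mem_boundedWords.1 hL
    obtain ⟨rfl, hR', -⟩ := mem_boundedWords.1 hR
    exact (glue_mem_boundedWords_iff hL'.perm hR'.perm).2 ⟨hsr, hL, hR⟩
  · rintro ⟨⟨s, r⟩, L, R⟩ hx ⟨⟨s', r'⟩, L', R'⟩ hx' hglue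
    simp only [Finset.coe_sigma, Set.mem_sigma_iff, Finset.mem_coe, Finset.mem_product] at hx hx'
    obtain ⟨rfl, hL, -⟩ := mem_boundedWords.1 hx.2.1
    obtain ⟨rfl, -⟩ := mem_boundedWords.1 hx.2.2
    obtain ⟨rfl, hL', -⟩ := mem_boundedWords.1 hx'.2.1
    obtain ⟨rfl, -⟩ := mem_boundedWords.1 hx'.2.2
    obtain ⟨rfl, rfl⟩ := glue_injective (fun _ ↦ lt_length_of_perm_range hL.perm)
      (fun _ ↦ lt_length_of_perm_range hL'.perm) hglue
    rfl
  · intro l hl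
    obtain ⟨hlen, hword, -⟩ := mem_boundedWords.1 hl
    obtain ⟨L, R, hL, hR, rfl⟩ :=
      exists_eq_glue hword.perm (List.ne_nil_of_length_eq_add_one hlen) hword.avoids
    obtain ⟨hsr, hmem⟩ := (glue_mem_boundedWords_iff hL hR).1 hl
    exact ⟨⟨(L.length, R.length), L, R⟩, by simp [hsr, hmem], rfl⟩

lemma isBoundedWord_ofFn_iff (m : ℕ) (π : Equiv.Perm (Fin n)) :
    IsBoundedWord m (List.ofFn fun i ↦ (π i : ℕ)) ↔ Avoids132 π ∧ MBounded m π := by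
  have hperm : (List.ofFn fun i ↦ (π i : ℕ)).Perm
      (List.range (List.ofFn fun i ↦ (π i : ℕ)).length) :=
    perm_range_length_of_nodup (List.nodup_ofFn.2 (Fin.val_injective.comp π.injective)) (by simp)
  have havoids : ((List.ofFn fun i ↦ (π i : ℕ)).Triplewise fun x y z ↦ ¬(x < z ∧ z < y)) ↔
      Avoids132 π := by
    simp only [List.triplewise_iff_getElem, List.length_ofFn, List.getElem_ofFn, Avoids132,
      not_exists, Fin.lt_def]
    exact ⟨fun h i j k hπ ↦ h i j k hπ.1 hπ.2.1 k.isLt hπ.2.2,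
      fun h i j k hij hjk hk hπ ↦ h ⟨i, by omega⟩ ⟨j, by omega⟩ ⟨k, hk⟩ ⟨hij, hjk, hπ⟩⟩
  have hbounded : ((List.ofFn fun i ↦ (π i : ℕ)).IsChain fun x y ↦ x ≤ y + m ∧ y ≤ x + m) ↔
      MBounded m π := by
    simp only [List.isChain_iff_getElem, List.length_ofFn, List.getElem_ofFn, MBounded, abs_le]
    exact forall₂_congr fun i hi ↦ by omega
  rw [← havoids, ← hbounded]
  exact ⟨fun h ↦ ⟨h.avoids, h.bounded⟩, fun h ↦ ⟨hperm, h.1, h.2⟩⟩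

lemma exists_ofFn_eq_of_perm_range (hl : l.Perm (List.range l.length)) :
    ∃ π : Equiv.Perm (Fin l.length), (List.ofFn fun i ↦ (π i : ℕ)) = l := by
  have hinj : Function.Injective fun i : Fin l.length ↦
      (⟨l[i], lt_length_of_perm_range hl (l.getElem_mem _)⟩ : Fin l.length) := fun i j hij ↦
    Fin.ext ((hl.nodup_iff.2 List.nodup_range).getElem_inj_iff.1 (Fin.ext_iff.1 hij))
  exact ⟨.ofBijective _ (Finite.injective_iff_bijective.1 hinj), List.ofFn_getElem⟩

theorem aCount_eq_wordCount (m n : ℕ) : aCount m n = wordCount m n ⊤ ⊤ := by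
  have hmem (π : Equiv.Perm (Fin n)) : (List.ofFn fun i ↦ (π i : ℕ)) ∈ boundedWords m n ⊤ ⊤ ↔
      Avoids132 π ∧ MBounded m π := by
    simp [mem_boundedWords, isBoundedWord_ofFn_iff]
  rw [aCount, wordCount, ← Nat.card_eq_finsetCard]
  refine Nat.card_eq_of_bijective (fun π ↦ ⟨List.ofFn fun i ↦ (π.1 i : ℕ), (hmem π.1).2 π.2⟩)
    ⟨fun π π' h ↦ ?_, ?_⟩
  · have hval := List.ofFn_injective (Subtype.ext_iff.1 h)
    exact Subtype.ext (Equiv.ext fun i ↦ Fin.ext (congrFun hval i))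
  · rintro ⟨l, hl⟩
    obtain ⟨rfl, hword, -⟩ := mem_boundedWords.1 hl
    obtain ⟨π, hπ⟩ := exists_ofFn_eq_of_perm_range hword.perm
    exact ⟨⟨π, (hmem π).1 (hπ.symm ▸ hl)⟩, Subtype.ext hπ⟩

end Counting

section GeneratingFunction

open PowerSeries Finset.HasAntidiagonal

variable {m : ℕ} {a b : ℕ∞}

/-- The ordinary generating function of `wordCount m · a b`. -/
noncomputable def wordGF (m : ℕ) (a b : ℕ∞) : ℝ⟦X⟧ := mk fun n ↦ (wordCount m n a b : ℝ)

@[simp]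
lemma coeff_wordGF (m : ℕ) (a b : ℕ∞) (n : ℕ) : coeff n (wordGF m a b) = wordCount m n a b :=
  coeff_mk _ _

lemma wordGF_zero_left (m : ℕ) (b : ℕ∞) : wordGF m 0 b = 1 := by
  ext (_ | n) <;> simp [wordCount_zero, wordCount_succ_zero_left, coeff_one]

lemma wordGF_zero_right (m : ℕ) (a : ℕ∞) : wordGF m a 0 = 1 := by
  ext (_ | n) <;> simp [wordCount_zero, wordCount_succ_zero_right, coeff_one]

/-- The sum is finite because a left block of length `s ≥ m` forces the right block to be empty. -/
theorem wordGF_succ (m : ℕ) (a b : ℕ∞) :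
    wordGF m (a + 1) (b + 1) = 1 + X * wordGF m a m + ∑ s ∈ Finset.range m,
      (wordCount m s a m : ℝ⟦X⟧) * (X ^ (s + 1) * (wordGF m (m - s) (b - s) - 1)) := by
  ext (_ | n)
  · simp [wordCount_zero, pow_succ]
  let right (s : ℕ) : ℝ⟦X⟧ := wordGF m (m - s) (b - s) - 1
  have hcount (s r : ℕ) :
      (wordCount m r (m - s) (b - s) : ℝ) = coeff r (1 : ℝ⟦X⟧) + coeff r (right s) := by
    rw [map_sub, add_sub_cancel, coeff_wordGF]
  have hright_eq_zero (s : ℕ) (hs : m ≤ s) : right s = 0 := by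
    have hms : (m - s : ℕ∞) = 0 := tsub_eq_zero_of_le (by exact_mod_cast hs)
    simp only [right, hms, wordGF_zero_left, sub_self]
  have hleft (s : ℕ) : coeff (n + 1) ((wordCount m s a m : ℝ⟦X⟧) * (X ^ (s + 1) * right s)) =
      if s ≤ n then wordCount m s a m * coeff (n - s) (right s) else 0 := by
    simp [← nsmul_eq_mul, coeff_X_pow_mul']
  have hempty : ∑ s ∈ Finset.range (n + 1), (wordCount m s a m : ℝ) * coeff (n - s) (1 : ℝ⟦X⟧) =
      wordCount m n a m := by
    simpa only [coeff_mul, Finset.Nat.sum_antidiagonal_eq_sum_range_succ_mk, coeff_wordGF] using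
      congrArg (coeff n) (mul_one (wordGF m a m))
  have hnonempty :
      ∑ s ∈ Finset.range m, (if s ≤ n then wordCount m s a m * coeff (n - s) (right s) else 0) =
        ∑ s ∈ Finset.range (n + 1), (wordCount m s a m : ℝ) * coeff (n - s) (right s) := by
    rw [← Finset.sum_filter]
    refine Finset.sum_subset (fun s hs ↦ by grind) fun s hs hs' ↦ ?_
    rw [hright_eq_zero s (by grind), map_zero, mul_zero]
  rw [coeff_wordGF, wordCount_succ, Finset.Nat.sum_antidiagonal_eq_sum_range_succ_mk]
  have hone : coeff (n + 1) (1 : ℝ⟦X⟧) = 0 := by simp [coeff_one]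
  change _ = coeff (n + 1) (1 + X * wordGF m a m + ∑ s ∈ Finset.range m,
    (wordCount m s a m : ℝ⟦X⟧) * (X ^ (s + 1) * right s))
  simp only [Nat.cast_sum, Nat.cast_mul, hcount, mul_add, Finset.sum_add_distrib, hempty, map_add,
    map_sum, hleft, hnonempty, coeff_succ_X_mul, coeff_wordGF, hone, zero_add]

lemma wordCount_one (m : ℕ) (a b : ℕ∞) : wordCount m 1 (a + 1) (b + 1) = 1 := by
  simpa [wordCount_zero] using wordCount_succ m 0 a b

lemma wordCount_two (m : ℕ) (a b : ℕ∞) : wordCount m 2 (a + 1) (b + 1) =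
    wordCount m 1 m b + wordCount m 1 a m := by
  simpa [wordCount_zero, Finset.Nat.sum_antidiagonal_eq_sum_range_succ_mk, Finset.sum_range_succ]
    using wordCount_succ m 1 a b

lemma wordGF_three_succ (a b : ℕ∞) :
    wordGF 3 (a + 1) (b + 1) = 1 + X * wordGF 3 a 3 + X * (wordGF 3 3 b - 1) +
      (wordCount 3 1 a 3 : ℝ⟦X⟧) * (X ^ 2 * (wordGF 3 2 (b - 1) - 1)) +
        (wordCount 3 2 a 3 : ℝ⟦X⟧) * (X ^ 3 * (wordGF 3 1 (b - 2) - 1)) := by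
  have h31 : (3 - 1 : ℕ∞) = 2 := rfl
  have h32 : (3 - 2 : ℕ∞) = 1 := rfl
  rw [wordGF_succ]
  simp only [Finset.sum_range_succ, Finset.sum_range_zero, wordCount_zero, Nat.cast_zero,
    Nat.cast_one, Nat.cast_ofNat, tsub_zero, h31, h32]
  ring

lemma wordCount_three_one (a : ℕ∞) : wordCount 3 1 (a + 1) 3 = 1 :=
  wordCount_one 3 a 2

lemma wordCount_three_two_one : wordCount 3 2 1 3 = 1 := by
  have h32 := wordCount_one 3 2 1
  have h13 := wordCount_two 3 0 2
  norm_num [wordCount_succ_zero_left] at h32 h13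
  rw [h13, h32]

lemma wordCount_three_two (a : ℕ∞) : wordCount 3 2 (a + 2) 3 = 2 := by
  have h32 := wordCount_one 3 2 1
  have ha3 := wordCount_two 3 (a + 1) 2
  norm_num [add_assoc, wordCount_three_one] at h32 ha3
  rw [ha3, h32]

lemma wordGF_three_one_right (b : ℕ∞) :
    wordGF 3 1 (b + 1) = 1 + X * wordGF 3 3 b := by
  have h := wordGF_three_succ 0 b
  norm_num [wordGF_zero_left, wordCount_succ_zero_left] at h
  linear_combination h

lemma wordGF_three_one_left (a : ℕ∞) : wordGF 3 (a + 1) 1 = 1 + X * wordGF 3 a 3 := by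
  have h := wordGF_three_succ a 0
  norm_num [wordGF_zero_right] at h
  exact h

lemma wordGF_three_three_two : wordGF 3 3 2 = 1 + (X + X ^ 2) * wordGF 3 2 3 := by
  have h12 : (1 - 2 : ℕ∞) = 0 := rfl
  have h31 := wordGF_three_one_left 2
  have h32 := wordGF_three_succ 2 1
  norm_num [wordGF_zero_right, h12] at h31 h32
  linear_combination h32 + X * h31

lemma wordGF_three_one_three : wordGF 3 1 3 = 1 + X + (X ^ 2 + X ^ 3) * wordGF 3 2 3 := by
  have h13 := wordGF_three_one_right 2
  norm_num [wordGF_three_three_two] at h13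
  linear_combination h13

lemma wordGF_three_add_two_three (a : ℕ∞) : wordGF 3 (a + 2) 3 =
    1 + X * wordGF 3 (a + 1) 3 + (X ^ 2 + X ^ 3) * wordGF 3 2 3 + X ^ 3 * wordGF 3 1 3 := by
  have h21sub : (2 - 1 : ℕ∞) = 1 := rfl
  have h21 := wordGF_three_one_left 1
  have ha3 := wordGF_three_succ (a + 1) 2
  norm_num [add_assoc, wordGF_zero_right, wordGF_three_three_two, h21sub, wordCount_three_one]
    at h21 ha3
  linear_combination ha3 + X ^ 2 * h21

lemma wordGF_three_two_top : wordGF 3 2 ⊤ = 1 + X * wordGF 3 1 3 + X * (wordGF 3 3 ⊤ - 1) +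
    X ^ 2 * (wordGF 3 2 ⊤ - 1) + X ^ 4 * wordGF 3 3 ⊤ := by
  have hone := wordCount_three_one 0
  have h1 := wordGF_three_one_right ⊤
  have h2 := wordGF_three_succ 1 ⊤
  norm_num [wordCount_three_two_one] at hone h1 h2
  norm_num [hone] at h2
  linear_combination h2 + X ^ 3 * h1

lemma wordGF_three_add_three_top (a : ℕ∞) : wordGF 3 (a + 3) ⊤ = 1 + X * wordGF 3 (a + 2) 3 +
    X * (wordGF 3 3 ⊤ - 1) + X ^ 2 * (wordGF 3 2 ⊤ - 1) + 2 * X ^ 4 * wordGF 3 3 ⊤ := by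
  have h1 := wordGF_three_one_right ⊤
  have hone := wordCount_three_one (a + 1)
  have ha := wordGF_three_succ (a + 2) ⊤
  norm_num [add_assoc, wordCount_three_two] at hone h1 ha
  norm_num [hone] at ha
  linear_combination ha + 2 * X ^ 3 * h1

lemma wordGF_three_top_top :
    wordGF 3 ⊤ ⊤ = wordGF 3 3 ⊤ + X * (wordGF 3 ⊤ 3 - wordGF 3 2 3) := by
  have h3 := wordGF_three_add_three_top 0
  have htop := wordGF_three_add_three_top ⊤
  norm_num at h3 htop
  linear_combination htop - h3

/-- The polynomial `H` of the theorem, whose zero in `(0, 1)` is the dominant pole. -/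
noncomputable def Hpoly : Polynomial ℝ :=
  Polynomial.X ^ 5 - Polynomial.X ^ 4 - Polynomial.X ^ 3 + Polynomial.X ^ 2 - 2 * Polynomial.X + 1

/-- The remaining factor of `D₃ = (1 - X²) * H * K`; it is the denominator of `wordGF 3 2 3`. -/
noncomputable def Kpoly : Polynomial ℝ :=
  1 - Polynomial.X ^ 2 - 2 * Polynomial.X ^ 3 - Polynomial.X ^ 4 - Polynomial.X ^ 5
    - Polynomial.X ^ 6

lemma coe_ofNat (n : ℕ) [n.AtLeastTwo] : ((ofNat(n) : Polynomial ℝ) : ℝ⟦X⟧) = ofNat(n) :=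
  map_ofNat Polynomial.coeToPowerSeries.ringHom n

lemma coe_Hpoly : (Hpoly : ℝ⟦X⟧) = X ^ 5 - X ^ 4 - X ^ 3 + X ^ 2 - 2 * X + 1 := by
  simp [Hpoly, coe_ofNat]

lemma coe_Kpoly : (Kpoly : ℝ⟦X⟧) = 1 - X ^ 2 - 2 * X ^ 3 - X ^ 4 - X ^ 5 - X ^ 6 := by
  simp [Kpoly, coe_ofNat]

lemma Kpoly_mul_wordGF_three_two_three :
    (Kpoly : ℝ⟦X⟧) * wordGF 3 2 3 = 1 + X + X ^ 2 + X ^ 3 + X ^ 4 := by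
  have h13 := wordGF_three_one_three
  have h23 := wordGF_three_add_two_three 0
  norm_num at h13 h23
  rw [coe_Kpoly]
  linear_combination h23 + (X + X ^ 3) * h13

lemma one_sub_X_mul_wordGF_three_top_three : (1 - X) * wordGF 3 ⊤ 3 =
    1 + (X ^ 2 + X ^ 3) * wordGF 3 2 3 + X ^ 3 * wordGF 3 1 3 := by
  have h := wordGF_three_add_two_three ⊤
  norm_num at h
  linear_combination h

lemma Hpoly_mul_wordGF_three_three_top : (1 + X) * (Hpoly : ℝ⟦X⟧) * wordGF 3 3 ⊤ =
    (1 - X ^ 2) * (1 - X + X * wordGF 3 2 3) + X ^ 3 * (wordGF 3 1 3 - 1) := by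
  have h2 := wordGF_three_two_top
  have h3 := wordGF_three_add_three_top 0
  norm_num at h3
  rw [coe_Hpoly]
  linear_combination (1 - X ^ 2) * h3 + X ^ 2 * h2

lemma D3poly_eq_mul : D3poly = (1 - Polynomial.X ^ 2) * Hpoly * Kpoly := by
  rw [D3poly, Hpoly, Kpoly]
  ring

theorem D3poly_mul_wordGF_three : (D3poly : ℝ⟦X⟧) * wordGF 3 ⊤ ⊤ = N3poly := by
  have hK := Kpoly_mul_wordGF_three_two_three
  have hH := Hpoly_mul_wordGF_three_three_top
  have hw := one_sub_X_mul_wordGF_three_top_three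
  have hv := wordGF_three_one_three
  have hD : (D3poly : ℝ⟦X⟧) = (1 - X ^ 2) * (Hpoly : ℝ⟦X⟧) * (Kpoly : ℝ⟦X⟧) := by
    simp [D3poly_eq_mul]
  have hN : (N3poly : ℝ⟦X⟧) = 1 - X - X ^ 2 + X ^ 3 + 4 * X ^ 4 - 4 * X ^ 6 - 3 * X ^ 7 -
      3 * X ^ 8 - 5 * X ^ 9 - 3 * X ^ 10 + 2 * X ^ 11 + 2 * X ^ 12 := by
    simp [N3poly, coe_ofNat]
  rw [hD, hN, wordGF_three_top_top]
  rw [coe_Hpoly] at hH ⊢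
  rw [coe_Kpoly] at hK ⊢
  set H : ℝ⟦X⟧ := X ^ 5 - X ^ 4 - X ^ 3 + X ^ 2 - 2 * X + 1
  set K : ℝ⟦X⟧ := 1 - X ^ 2 - 2 * X ^ 3 - X ^ 4 - X ^ 5 - X ^ 6
  linear_combination (1 - X) * K * hH + X * (1 + X) * H * K * hw +
    ((1 - X) * K * X ^ 3 + X * (1 + X) * H * K * X ^ 3) * hv +
    ((1 - X) * ((1 - X ^ 2) * X + X ^ 3 * (X ^ 2 + X ^ 3)) +
      X * (1 + X) * H * (X ^ 2 + X ^ 3 + X ^ 3 * (X ^ 2 + X ^ 3) - (1 - X))) * hK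

end GeneratingFunction

section DominantRoot

open PowerSeries Finset.HasAntidiagonal

variable {𝕜 : Type*} [NormedField 𝕜]

/-- Absolute convergence of the power series `f` at the point `z`. -/
def AbsConvergesAt (z : 𝕜) (f : 𝕜⟦X⟧) : Prop :=
  Summable fun n ↦ ‖coeff n f * z ^ n‖

variable {z : 𝕜} {f g : 𝕜⟦X⟧}

lemma coeff_mul_mul_pow (z : 𝕜) (f g : 𝕜⟦X⟧) (n : ℕ) :
    coeff n (f * g) * z ^ n = ∑ kl ∈ antidiagonal n,
      (coeff kl.1 f * z ^ kl.1) * (coeff kl.2 g * z ^ kl.2) := by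
  rw [coeff_mul, Finset.sum_mul]
  refine Finset.sum_congr rfl fun kl hkl ↦ ?_
  rw [← mem_antidiagonal.1 hkl, pow_add]
  ring

lemma AbsConvergesAt.mul (hf : AbsConvergesAt z f) (hg : AbsConvergesAt z g) :
    AbsConvergesAt z (f * g) := by
  simpa only [AbsConvergesAt, coeff_mul_mul_pow] using
    summable_norm_sum_mul_antidiagonal_of_summable_norm hf hg

lemma tsum_coeff_mul_mul_pow [CompleteSpace 𝕜] (hf : AbsConvergesAt z f)
    (hg : AbsConvergesAt z g) :
    ∑' n, coeff n (f * g) * z ^ n = (∑' n, coeff n f * z ^ n) * ∑' n, coeff n g * z ^ n := by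
  simp only [coeff_mul_mul_pow]
  exact (tsum_mul_tsum_eq_tsum_sum_antidiagonal_of_summable_norm hf hg).symm

lemma absConvergesAt_coe (z : 𝕜) (p : Polynomial 𝕜) : AbsConvergesAt z (p : 𝕜⟦X⟧) := by
  refine summable_of_ne_finset_zero (s := p.support) fun n hn ↦ ?_
  simp [Polynomial.notMem_support_iff.1 hn]

lemma tsum_coeff_coe_mul_pow (z : 𝕜) (p : Polynomial 𝕜) :
    ∑' n, coeff n (p : 𝕜⟦X⟧) * z ^ n = p.eval z := by
  rw [Polynomial.eval_eq_sum, Polynomial.sum, tsum_eq_sum (s := p.support)]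
  · simp only [Polynomial.coeff_coe]
  · intro n hn
    simp [Polynomial.notMem_support_iff.1 hn]

lemma absConvergesAt_invUnitsSub {u : 𝕜ˣ} (hu : ‖z‖ < ‖(u : 𝕜)‖) :
    AbsConvergesAt z (invUnitsSub u) := by
  have hratio : ‖z / (u : 𝕜)‖ < 1 := by
    rw [norm_div]
    exact (div_lt_one ((norm_nonneg z).trans_lt hu)).2 hu
  refine ((summable_geometric_of_lt_one (norm_nonneg _) hratio).mul_left ‖(u : 𝕜)⁻¹‖).congr
    fun n ↦ ?_
  rw [coeff_invUnitsSub, ← norm_pow, ← norm_mul, one_divp, div_pow, pow_succ]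
  congr 1
  push_cast
  field_simp

lemma AbsConvergesAt.of_X_sub_C_mul {a : 𝕜} (ha : ‖z‖ < ‖a‖)
    (h : AbsConvergesAt z ((X - C a) * f)) : AbsConvergesAt z f := by
  have ha0 : a ≠ 0 := norm_pos_iff.1 ((norm_nonneg z).trans_lt ha)
  have hneg : AbsConvergesAt z ((C a - X) * f) := by
    have hflip : (C a - X) * f = ((-1 : Polynomial 𝕜) : 𝕜⟦X⟧) * ((X - C a) * f) := by
      push_cast
      ring
    exact hflip ▸ (absConvergesAt_coe z _).mul h
  have hinv := invUnitsSub_mul_sub (Units.mk0 a ha0)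
  rw [Units.val_mk0] at hinv
  have hf : f = invUnitsSub (Units.mk0 a ha0) * ((C a - X) * f) := by
    rw [← mul_assoc, hinv, one_mul]
  exact hf ▸ (absConvergesAt_invUnitsSub ha).mul hneg

lemma AbsConvergesAt.of_coe_mul [IsAlgClosed 𝕜] {q : Polynomial 𝕜}
    (hq : ∀ w, q.IsRoot w → ‖z‖ < ‖w‖) (h : AbsConvergesAt z (q * f)) : AbsConvergesAt z f := by
  have hq0 : q ≠ 0 := by
    rintro rfl
    simpa using (norm_nonneg z).trans_lt (hq 0 (by simp))
  have hprod : ∀ s : Multiset 𝕜, (∀ w ∈ s, ‖z‖ < ‖w‖) →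
      AbsConvergesAt z (((s.map fun w ↦ Polynomial.X - Polynomial.C w).prod : Polynomial 𝕜) * f) →
      AbsConvergesAt z f := by
    intro s
    induction s using Multiset.induction with
    | empty => simp
    | cons a s ih =>
      intro hs hconv
      simp only [Multiset.forall_mem_cons] at hs
      refine ih hs.2 (.of_X_sub_C_mul hs.1 ?_)
      simpa [mul_assoc] using hconv
  refine hprod q.roots (fun w hw ↦ hq w (Polynomial.isRoot_of_mem_roots hw)) ?_
  have hlead : q.leadingCoeff ≠ 0 := Polynomial.leadingCoeff_ne_zero.2 hq0
  have hmonic : ((q.roots.map fun w ↦ Polynomial.X - Polynomial.C w).prod : Polynomial 𝕜) =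
      Polynomial.C q.leadingCoeff⁻¹ * q := by
    nth_rewrite 3 [(IsAlgClosed.splits q).eq_prod_roots]
    rw [← mul_assoc, ← Polynomial.C_mul, inv_mul_cancel₀ hlead, Polynomial.C_1, one_mul]
  rw [hmonic, Polynomial.coe_mul, mul_assoc]
  exact (absConvergesAt_coe z _).mul h

lemma sum_range_coeff_X_sub_C_mul (z : 𝕜) (f : 𝕜⟦X⟧) (n : ℕ) :
    ∑ k ∈ Finset.range (n + 1), coeff k ((X - C z) * f) * z ^ k = -z * (coeff n f * z ^ n) := by
  induction n with
  | zero => simp [sub_mul]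
  | succ n ih =>
    rw [Finset.sum_range_succ, ih, sub_mul, map_sub, coeff_succ_X_mul, coeff_C_mul]
    ring

/-- `-N(ρ) / (ρ D'(ρ))` is minus the residue of `N / D` at `ρ`, divided by `ρ`. -/
theorem tendsto_coeff_mul_pow_of_dominant_simple_root [IsAlgClosed 𝕜] [CompleteSpace 𝕜]
    {N D : Polynomial 𝕜} {ρ : 𝕜} (hf : (D : 𝕜⟦X⟧) * f = N) (hρ : ρ ≠ 0) (hroot : D.IsRoot ρ)
    (hsimple : D.derivative.eval ρ ≠ 0)
    (hdom : ∀ w, D.IsRoot w → ‖w‖ ≤ ‖ρ‖ → w = ρ) :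
    Tendsto (fun n ↦ coeff n f * ρ ^ n) atTop
      (𝓝 (-N.eval ρ / (ρ * D.derivative.eval ρ))) := by
  obtain ⟨Q, rfl⟩ := Polynomial.dvd_iff_isRoot.2 hroot
  have hderiv : ((Polynomial.X - Polynomial.C ρ) * Q).derivative.eval ρ = Q.eval ρ := by simp
  rw [hderiv] at hsimple ⊢
  have hQ : ∀ w, Q.IsRoot w → ‖ρ‖ < ‖w‖ := by
    intro w hw
    by_contra! hle
    have hwρ : w = ρ := hdom w (by simp [hw.eq_zero]) hle
    exact hsimple (hwρ ▸ hw)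
  have hQmul : (Q : 𝕜⟦X⟧) * ((X - C ρ) * f) = (N : 𝕜⟦X⟧) := by
    rw [← hf]
    push_cast
    ring
  have hconv : AbsConvergesAt ρ ((X - C ρ) * f) :=
    .of_coe_mul hQ (hQmul ▸ absConvergesAt_coe ρ N)
  have hval : ∑' n, coeff n ((X - C ρ) * f) * ρ ^ n = N.eval ρ / Q.eval ρ := by
    rw [eq_div_iff hsimple, mul_comm, ← tsum_coeff_coe_mul_pow ρ Q,
      ← tsum_coeff_mul_mul_pow (absConvergesAt_coe ρ Q) hconv, hQmul, tsum_coeff_coe_mul_pow]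
  have hpartial := (tendsto_add_atTop_iff_nat 1).2 hconv.of_norm.hasSum.tendsto_sum_nat
  simp only [sum_range_coeff_X_sub_C_mul, hval] at hpartial
  convert hpartial.div_const (-ρ) using 2 with n
  · rw [mul_div_cancel_left₀ _ (neg_ne_zero.2 hρ)]
  · rw [div_div, mul_neg, div_neg, neg_div, mul_comm ρ]

end DominantRoot

theorem tendsto_real_coeff_mul_pow_of_dominant_simple_root
    {N D : Polynomial ℝ} {f : PowerSeries ℝ} {ρ : ℝ} (hf : (D : PowerSeries ℝ) * f = N)
    (hρ : ρ ≠ 0) (hroot : D.IsRoot ρ) (hsimple : D.derivative.eval ρ ≠ 0)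
    (hdom : ∀ w : ℂ, Polynomial.aeval w D = 0 → ‖w‖ ≤ |ρ| → w = ρ) :
    Tendsto (fun n ↦ f.coeff n * ρ ^ n) atTop
      (𝓝 (-N.eval ρ / (ρ * D.derivative.eval ρ))) := by
  have hmap : ((D.map Complex.ofRealHom : Polynomial ℂ) : PowerSeries ℂ) *
      f.map Complex.ofRealHom = (N.map Complex.ofRealHom : Polynomial ℂ) := by
    simp only [Polynomial.polynomial_map_coe, ← map_mul, hf]
  have heval (p : Polynomial ℝ) : (p.map Complex.ofRealHom).eval (ρ : ℂ) = (p.eval ρ : ℝ) :=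
    Polynomial.eval_map_apply (f := Complex.ofRealHom) ρ
  have hderiv : (D.map Complex.ofRealHom).derivative.eval (ρ : ℂ) = (D.derivative.eval ρ : ℝ) := by
    rw [Polynomial.derivative_map, heval]
  have hdom' (w : ℂ) (hw : (D.map Complex.ofRealHom).IsRoot w) (hle : ‖w‖ ≤ ‖(ρ : ℂ)‖) : w = ρ := by
    refine hdom w ?_ (by simpa using hle)
    rw [Polynomial.aeval_def, ← Polynomial.eval_map]
    exact hw
  have hlim := tendsto_coeff_mul_pow_of_dominant_simple_root hmap (Complex.ofReal_ne_zero.2 hρ)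
    hroot.map (by rw [hderiv]; exact Complex.ofReal_ne_zero.2 hsimple) hdom'
  rw [hderiv, heval] at hlim
  rw [← tendsto_ofReal_iff]
  simpa using hlim

section DominantPole

lemma Hpoly_eval (x : ℝ) : Hpoly.eval x = x ^ 5 - x ^ 4 - x ^ 3 + x ^ 2 - 2 * x + 1 := by
  simp [Hpoly]

lemma Hpoly_derivative_eval_neg {x : ℝ} (hx : x ∈ Set.Icc (0 : ℝ) 1) :
    Hpoly.derivative.eval x < 0 := by
  have h0 : 0 ≤ x := hx.1
  have h1 : 0 ≤ 1 - x := sub_nonneg.2 hx.2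
  have heval : Hpoly.derivative.eval x =
      -(4 * x ^ 3 * (1 - x) + x ^ 2 * (1 - x) * (1 + x) + x ^ 2 + (1 - x) ^ 2 + 1) := by
    simp only [Hpoly, Polynomial.derivative_add, Polynomial.derivative_sub,
      Polynomial.derivative_X_pow, Polynomial.derivative_mul, Polynomial.derivative_ofNat,
      Polynomial.derivative_X, Polynomial.derivative_one, Polynomial.eval_add, Polynomial.eval_sub,
      Polynomial.eval_mul, Polynomial.eval_pow, Polynomial.eval_C, Polynomial.eval_X,
      Polynomial.eval_ofNat, Polynomial.eval_zero, Polynomial.eval_one]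
    norm_num1
    ring
  rw [heval, neg_lt_zero]
  positivity

lemma Hpoly_strictAntiOn : StrictAntiOn (fun x ↦ Hpoly.eval x) (Set.Icc 0 1) := by
  refine strictAntiOn_of_deriv_neg (convex_Icc 0 1) Hpoly.continuousOn fun x hx ↦ ?_
  rw [Polynomial.deriv]
  exact Hpoly_derivative_eval_neg (interior_subset hx)

lemma exists_Hpoly_isRoot : ∃ ρ ∈ Set.Ioo (1 / 2 : ℝ) (11 / 20), Hpoly.IsRoot ρ := by
  refine intermediate_value_Ioo' (by norm_num) Hpoly.continuousOn ⟨?_, ?_⟩ <;>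
    norm_num [Hpoly_eval]

lemma norm_ofReal_mul_pow_le {c B r : ℝ} {z : ℂ} (hc : |c| ≤ B) (hz : ‖z‖ ≤ r) (n : ℕ) :
    ‖(c : ℂ) * z ^ n‖ ≤ B * r ^ n := by
  rw [norm_mul, norm_pow, Complex.norm_real, Real.norm_eq_abs]
  gcongr
  exact (abs_nonneg c).trans hc

lemma add_ne_zero_of_norm_lt_norm {E : Type*} [SeminormedAddGroup E] {a b : E} (h : ‖b‖ < ‖a‖) :
    a + b ≠ 0 := by
  intro hab
  rw [eq_neg_of_add_eq_zero_left hab, norm_neg] at h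
  exact lt_irrefl _ h

lemma aeval_Kpoly_ne_zero {z : ℂ} (hz : ‖z‖ ≤ 11 / 20) : Polynomial.aeval z Kpoly ≠ 0 := by
  have hterm (c : ℝ) (n : ℕ) := norm_ofReal_mul_pow_le (le_refl |c|) hz n
  have htail := norm_add_le_of_le (norm_add_le_of_le (norm_add_le_of_le (norm_add_le_of_le
    (hterm (-1) 2) (hterm (-2) 3)) (hterm (-1) 4)) (hterm (-1) 5)) (hterm (-1) 6)
  have heval : Polynomial.aeval z Kpoly = 1 + (((-1 : ℝ) : ℂ) * z ^ 2 + ((-2 : ℝ) : ℂ) * z ^ 3 +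
      ((-1 : ℝ) : ℂ) * z ^ 4 + ((-1 : ℝ) : ℂ) * z ^ 5 + ((-1 : ℝ) : ℂ) * z ^ 6) := by
    simp only [Kpoly, map_sub, map_mul, map_pow, map_one, map_ofNat, Polynomial.aeval_X]
    push_cast
    ring
  rw [heval]
  refine add_ne_zero_of_norm_lt_norm (htail.trans_lt ?_)
  norm_num

/-- On this disc the constant term dominates the sum of the others. -/
lemma Hpoly_quotient_ne_zero {ρ : ℝ} (hρ : ρ ∈ Set.Ioo (1 / 2 : ℝ) (11 / 20)) {z : ℂ}
    (hz : ‖z‖ ≤ 11 / 20) :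
    (ρ ^ 4 - ρ ^ 3 - ρ ^ 2 + ρ - 2) + (ρ ^ 3 - ρ ^ 2 - ρ + 1) * z + (ρ ^ 2 - ρ - 1) * z ^ 2 +
      (ρ - 1) * z ^ 3 + z ^ 4 ≠ 0 := by
  obtain ⟨hlo, hhi⟩ := hρ
  have h0 : 7 / 5 ≤ ‖((ρ ^ 4 - ρ ^ 3 - ρ ^ 2 + ρ - 2 : ℝ) : ℂ)‖ := by
    rw [Complex.norm_real, Real.norm_eq_abs, le_abs]
    right
    nlinarith [mul_pos (sub_pos.2 hlo) (sub_pos.2 hhi), sq_nonneg (ρ ^ 2)]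
  have h1 : |ρ ^ 3 - ρ ^ 2 - ρ + 1| ≤ 2 / 5 := abs_le.2 ⟨by nlinarith, by nlinarith⟩
  have h2 : |ρ ^ 2 - ρ - 1| ≤ 5 / 4 := abs_le.2 ⟨by nlinarith, by nlinarith⟩
  have h3 : |ρ - 1| ≤ 1 / 2 := abs_le.2 ⟨by linarith, by linarith⟩
  have htail := norm_add_le_of_le (norm_add_le_of_le (norm_add_le_of_le
    (norm_ofReal_mul_pow_le h1 hz 1) (norm_ofReal_mul_pow_le h2 hz 2))
    (norm_ofReal_mul_pow_le h3 hz 3)) (norm_ofReal_mul_pow_le abs_one.le hz 4)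
  intro h
  refine add_ne_zero_of_norm_lt_norm ((htail.trans_lt (by norm_num)).trans_le h0) ?_
  push_cast
  linear_combination h

lemma eq_of_aeval_Hpoly_eq_zero {ρ : ℝ} (hρ : ρ ∈ Set.Ioo (1 / 2 : ℝ) (11 / 20))
    (hroot : Hpoly.IsRoot ρ) {z : ℂ} (hz : ‖z‖ ≤ 11 / 20) (hHz : Polynomial.aeval z Hpoly = 0) :
    z = ρ := by
  have hρ0 : (ρ : ℂ) ^ 5 - ρ ^ 4 - ρ ^ 3 + ρ ^ 2 - 2 * ρ + 1 = 0 := by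
    exact_mod_cast (Hpoly_eval ρ).symm.trans hroot
  have hz0 : z ^ 5 - z ^ 4 - z ^ 3 + z ^ 2 - 2 * z + 1 = 0 := by
    simpa only [Hpoly, map_add, map_sub, map_mul, map_pow, map_one, map_ofNat, Polynomial.aeval_X]
      using hHz
  refine sub_eq_zero.1 ((mul_eq_zero.1 ?_).resolve_right (Hpoly_quotient_ne_zero hρ hz))
  linear_combination hz0 - hρ0

lemma one_sub_pow_ne_zero_of_norm_lt_one {𝕜 : Type*} [NormedDivisionRing 𝕜] {z : 𝕜}
    (hz : ‖z‖ < 1) {n : ℕ} (hn : n ≠ 0) : 1 - z ^ n ≠ 0 := by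
  rw [sub_ne_zero]
  intro h
  have hnorm := congrArg norm h
  rw [norm_one, norm_pow] at hnorm
  exact (pow_lt_one₀ (norm_nonneg z) hz hn).ne' hnorm

lemma eq_of_aeval_D3poly_eq_zero {ρ : ℝ} (hρ : ρ ∈ Set.Ioo (1 / 2 : ℝ) (11 / 20))
    (hroot : Hpoly.IsRoot ρ) {z : ℂ} (hz : ‖z‖ ≤ 11 / 20) (hDz : Polynomial.aeval z D3poly = 0) :
    z = ρ := by
  simp only [D3poly_eq_mul, map_mul, map_sub, map_one, map_pow, Polynomial.aeval_X, mul_eq_zero,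
    aeval_Kpoly_ne_zero hz, one_sub_pow_ne_zero_of_norm_lt_one (hz.trans_lt (by norm_num))
      two_ne_zero, or_false, false_or] at hDz
  exact eq_of_aeval_Hpoly_eq_zero hρ hroot hz hDz

lemma D3poly_isRoot {x : ℝ} (hx : Hpoly.IsRoot x) : D3poly.IsRoot x := by
  rw [D3poly_eq_mul]
  exact Polynomial.root_mul_right_of_isRoot _ (Polynomial.root_mul_left_of_isRoot _ hx)

lemma D3poly_derivative_eval_ne_zero {ρ : ℝ} (hρ : ρ ∈ Set.Ioo (1 / 2 : ℝ) (11 / 20))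
    (hroot : Hpoly.IsRoot ρ) : D3poly.derivative.eval ρ ≠ 0 := by
  have hnorm : ‖(ρ : ℂ)‖ ≤ 11 / 20 := by
    rw [Complex.norm_real, Real.norm_eq_abs, abs_le]
    constructor <;> linarith [hρ.1, hρ.2]
  have hK : Kpoly.eval ρ ≠ 0 := by
    simpa [← Complex.coe_algebraMap, Polynomial.aeval_algebraMap_apply] using
      aeval_Kpoly_ne_zero hnorm
  have hsq : 1 - ρ ^ 2 ≠ 0 := by nlinarith [hρ.1, hρ.2]
  have hH : Hpoly.derivative.eval ρ ≠ 0 :=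
    (Hpoly_derivative_eval_neg ⟨by linarith [hρ.1], by linarith [hρ.2]⟩).ne
  have heval : D3poly.derivative.eval ρ =
      (1 - ρ ^ 2) * Hpoly.derivative.eval ρ * Kpoly.eval ρ := by
    simp [D3poly_eq_mul, hroot.eq_zero]
  rw [heval]
  exact mul_ne_zero (mul_ne_zero hsq hH) hK

end DominantPole

end Bounded132

theorem asymptotics_m_eq_three :
    StrictAntiOn (fun x : ℝ => x ^ 5 - x ^ 4 - x ^ 3 + x ^ 2 - 2 * x + 1)
      (Set.Icc (0 : ℝ) 1) ∧
    ∃ ρ : ℝ, ρ ∈ Set.Ioo (0 : ℝ) 1 ∧ ρ ^ 5 - ρ ^ 4 - ρ ^ 3 + ρ ^ 2 - 2 * ρ + 1 = 0 ∧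
      (∀ t : ℝ, t ∈ Set.Ioo (0 : ℝ) 1 → t ^ 5 - t ^ 4 - t ^ 3 + t ^ 2 - 2 * t + 1 = 0 → t = ρ) ∧
      Filter.Tendsto (fun n : ℕ => (aCount 3 n : ℝ) * ρ ^ n) Filter.atTop
        (nhds (-(N3poly.eval ρ) / (ρ * (Polynomial.derivative D3poly).eval ρ))) := by
  simp only [← Bounded132.Hpoly_eval]
  refine ⟨Bounded132.Hpoly_strictAntiOn, ?_⟩
  obtain ⟨ρ, hρ, hroot⟩ := Bounded132.exists_Hpoly_isRoot
  have hρpos : 0 < ρ := by linarith [hρ.1]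
  have hρmem : ρ ∈ Set.Ioo (0 : ℝ) 1 := ⟨hρpos, by linarith [hρ.2]⟩
  refine ⟨ρ, hρmem, hroot, fun t ht hHt ↦ ?_, ?_⟩
  · exact Bounded132.Hpoly_strictAntiOn.injOn (Set.Ioo_subset_Icc_self ht)
      (Set.Ioo_subset_Icc_self hρmem) (hHt.trans hroot.symm)
  · have hlim := Bounded132.tendsto_real_coeff_mul_pow_of_dominant_simple_root
      Bounded132.D3poly_mul_wordGF_three hρpos.ne' (Bounded132.D3poly_isRoot hroot)
      (Bounded132.D3poly_derivative_eval_ne_zero hρ hroot) fun w hw hle ↦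
        Bounded132.eq_of_aeval_D3poly_eq_zero hρ hroot
          (hle.trans (by rw [abs_of_pos hρpos]; exact hρ.2.le)) hw
    simpa only [Bounded132.coeff_wordGF, ← Bounded132.aCount_eq_wordCount] using hlim
end
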